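/- arXiv:1907.05455 — 2 statements merged into one kernel-verified Lean document; each statement's English description precedes it below -/
import Mathlib

section
/- Let D ⊆ ℂ^N be a pseudoconvex domain and let K_0, …, K_n be compact 𝒪(D)-convex subsets of D. Suppose that for each j = 1, …, n there is f ∈ 𝒪(D) such that the polynomial hulls in ℂ of f(K_j) and of f(K_0 ∪ ⋯ ∪ K_{j−1}) are disjoint. Then K_0 ∪ ⋯ ∪ K_n is 𝒪(D)-convex. -/
open Set Filter Topology Metric MeasureTheory
open scoped ENNReal NNReal InnerProductSpace ComplexConjugate

noncomputable section

/-- `ℂ^N` with the Euclidean structure. -/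
abbrev EN (N : ℕ) := EuclideanSpace ℂ (Fin N)

instance {N : ℕ} : MeasurableSpace (EN N) := borel _
instance {N : ℕ} : BorelSpace (EN N) := ⟨rfl⟩

/-- A domain: a nonempty open connected subset. -/
def IsDomainSet {N : ℕ} (D : Set (EN N)) : Prop := IsOpen D ∧ IsConnected D

/-- `u` is plurisubharmonic on `D`: upper semicontinuous on `D`, and its restriction to
every complex affine line satisfies the sub-mean value inequality on every closed disc
(of that line) contained in `D`. -/
def PlurisubharmonicOn {N : ℕ} (u : EN N → ℝ) (D : Set (EN N)) : Prop :=
  UpperSemicontinuousOn u D ∧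
  ∀ (a b : EN N) (t₀ : ℂ) (r : ℝ), 0 < r →
    (fun t : ℂ => a + t • b) '' Metric.closedBall t₀ r ⊆ D →
    u (a + t₀ • b) ≤ (2 * Real.pi)⁻¹ *
      ∫ θ in (0:ℝ)..(2 * Real.pi), u (a + (t₀ + r * Complex.exp (θ * Complex.I)) • b)

/-- `D` is a pseudoconvex domain: a domain carrying a continuous plurisubharmonic
exhaustion function. -/
def Pseudoconvex {N : ℕ} (D : Set (EN N)) : Prop :=
  IsDomainSet D ∧ ∃ u : EN N → ℝ, ContinuousOn u D ∧ PlurisubharmonicOn u D ∧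
    ∀ c : ℝ, IsCompact (closure {z ∈ D | u z < c}) ∧ closure {z ∈ D | u z < c} ⊆ D

/-- The space `𝒪(D)` of holomorphic functions on `D`, as a submodule of `ℂ^N → ℂ`. -/
def Hol {N : ℕ} (D : Set (EN N)) : Submodule ℂ (EN N → ℂ) where
  carrier := {f | DifferentiableOn ℂ f D}
  add_mem' hf hg := hf.add hg
  zero_mem' := differentiableOn_const 0
  smul_mem' c f hf := hf.const_smul c

/-- The topology of uniform convergence on compact subsets of `D`, on `𝒪(D)`. -/
instance holTopology {N : ℕ} (D : Set (EN N)) : TopologicalSpace ↥(Hol D) :=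
  TopologicalSpace.induced
    (fun f => UniformOnFun.ofFun {K : Set (EN N) | K ⊆ D ∧ IsCompact K} f.1)
    inferInstance

/-- A set is residual if it contains a dense `G_δ` set. -/
def ResidualIn {X : Type*} [TopologicalSpace X] (S : Set X) : Prop :=
  ∃ T : Set X, T ⊆ S ∧ IsGδ T ∧ Dense T

/-- `S` is densely lineable: `S ∪ {0}` contains a dense vector subspace. -/
def DenselyLineableIn {X : Type*} [TopologicalSpace X] [AddCommMonoid X] [Module ℂ X]
    (S : Set X) : Prop :=
  ∃ p : Submodule ℂ X, Dense (p : Set X) ∧ (p : Set X) ⊆ S ∪ {0}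

/-- `S` is spaceable: `S ∪ {0}` contains a closed infinite-dimensional vector subspace. -/
def SpaceableIn {X : Type*} [TopologicalSpace X] [AddCommMonoid X] [Module ℂ X]
    (S : Set X) : Prop :=
  ∃ p : Submodule ℂ X, IsClosed (p : Set X) ∧ ¬ Module.Finite ℂ ↥p ∧ (p : Set X) ⊆ S ∪ {0}

/-- A finite length path to `bD`: continuous and piecewise `C¹` on `[0,1)`, with values in `D`,
finite length (total variation), converging to a boundary point of `D` as `r → 1`. -/
def FiniteLengthPathTo {N : ℕ} (D : Set (EN N)) (γ : ℝ → EN N) : Prop :=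
  MapsTo γ (Ico (0:ℝ) 1) D ∧ ContinuousOn γ (Ico (0:ℝ) 1) ∧
  (∃ u : ℕ → ℝ, u 0 = 0 ∧ StrictMono u ∧ (∀ n, u n < 1) ∧ Tendsto u atTop (𝓝 1) ∧
    ∀ n, ContDiffOn ℝ 1 γ (Icc (u n) (u (n+1)))) ∧
  eVariationOn γ (Ico (0:ℝ) 1) < ⊤ ∧
  ∃ ζ ∈ frontier D, Tendsto γ (𝓝[<] (1:ℝ)) (𝓝 ζ)

/-- The set of `f ∈ 𝒪(D)` with maximal cluster set along every finite length path to `bD`. -/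
def WildSet {N : ℕ} (D : Set (EN N)) : Set ↥(Hol D) :=
  {f | ∀ γ : ℝ → EN N, FiniteLengthPathTo D γ → ∀ c : ℂ,
    ∃ r : ℕ → ℝ, (∀ n, r n ∈ Ico (0:ℝ) 1) ∧ Tendsto r atTop (𝓝 1) ∧
      Tendsto (fun n => f.1 (γ (r n))) atTop (𝓝 c)}

/-- The `𝒪(D)`-hull of `K`. -/
def holHull {N : ℕ} (D K : Set (EN N)) : Set (EN N) :=
  {z ∈ D | ∀ φ : EN N → ℂ, DifferentiableOn ℂ φ D → ‖φ z‖ ≤ ⨆ w ∈ K, ‖φ w‖}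

/-- `K` is `𝒪(D)`-convex. -/
def HolConvexIn {N : ℕ} (D K : Set (EN N)) : Prop := K ⊆ D ∧ holHull D K = K

/-- The polynomial hull of a compact subset of `ℂ`. -/
def polyHull1 (E : Set ℂ) : Set ℂ :=
  {z | ∀ p : Polynomial ℂ, ‖p.eval z‖ ≤ ⨆ w ∈ E, ‖p.eval w‖}

/-- The polynomial hull of a subset of `ℂ^N`. -/
def polyHull {N : ℕ} (E : Set (EN N)) : Set (EN N) :=
  {z | ∀ p : MvPolynomial (Fin N) ℂ,
    ‖MvPolynomial.eval (fun j => z j) p‖ ≤ ⨆ w ∈ E, ‖MvPolynomial.eval (fun j => w j) p‖}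

/-- `E ⊆ ℂ^N` is polynomially convex. -/
def PolynomiallyConvex {N : ℕ} (E : Set (EN N)) : Prop := polyHull E = E

/-- The (real) Hessian of `ρ` at `p`, applied to the pair `(v, w)`. -/
def Hess {N : ℕ} (ρ : EN N → ℝ) (p v w : EN N) : ℝ :=
  fderiv ℝ (fderiv ℝ ρ) p v w

/-- The Levi form `∑_{j,k} ∂²ρ/∂z_j∂z̄_k (p) w_j w̄_k`, expressed through the real Hessian. -/
def LeviForm {N : ℕ} (ρ : EN N → ℝ) (p w : EN N) : ℝ :=
  (Hess ρ p w w + Hess ρ p (Complex.I • w) (Complex.I • w)) / 4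

/-- `w` belongs to the complex tangent space `{w : ∑_j ∂ρ/∂z_j(p) w_j = 0}` at `p`. -/
def ComplexTangent {N : ℕ} (ρ : EN N → ℝ) (p w : EN N) : Prop :=
  fderiv ℝ ρ p w = 0 ∧ fderiv ℝ ρ p (Complex.I • w) = 0

/-- `ρ` is a `C²` defining function for `D` on the open neighborhood `V` of `cl D`. -/
def IsDefiningFunctionOn {N : ℕ} (D : Set (EN N)) (ρ : EN N → ℝ) (V : Set (EN N)) : Prop :=
  IsOpen V ∧ closure D ⊆ V ∧ ContDiffOn ℝ 2 ρ V ∧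
  D = {z ∈ V | ρ z < 0} ∧ ∀ p ∈ frontier D, fderiv ℝ ρ p ≠ 0

/-- `D` is a strictly pseudoconvex domain with defining function `ρ`. -/
def StrictPSCWith {N : ℕ} (D : Set (EN N)) (ρ : EN N → ℝ) : Prop :=
  IsDomainSet D ∧ Bornology.IsBounded D ∧ (∃ V, IsDefiningFunctionOn D ρ V) ∧
  ∀ p ∈ frontier D, ∀ w : EN N, w ≠ 0 → ComplexTangent ρ p w → 0 < LeviForm ρ p w

/-- `D` is a strictly pseudoconvex domain. -/
def StrictlyPseudoconvex {N : ℕ} (D : Set (EN N)) : Prop := ∃ ρ, StrictPSCWith D ρ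

/-- `ρ` and `σ` are at `C²`-distance `< ε` on `V`. -/
def C2DistLt {N : ℕ} (V : Set (EN N)) (ρ σ : EN N → ℝ) (ε : ℝ) : Prop :=
  ∀ z ∈ V, |ρ z - σ z| + ‖fderiv ℝ ρ z - fderiv ℝ σ z‖ +
    ‖fderiv ℝ (fderiv ℝ ρ) z - fderiv ℝ (fderiv ℝ σ) z‖ < ε

/-- The standing assumptions on the map `γ : bD × [0,1] → cl D`: it is `C^k`, maps
`bD × [0,1)` into `D`, satisfies `γ(x,1) = x`, and the curves `r ↦ γ(x,r)` hit `bD`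
transversally at `x` (the `r`-derivative at `1` is not annihilated by `dρ(x)`,
i.e. it is not tangent to `bD` at `x`). -/
def GammaMap {N : ℕ} (D : Set (EN N)) (ρ : EN N → ℝ) (γ : EN N × ℝ → EN N) (k : ℕ) : Prop :=
  ContDiffOn ℝ k γ ((frontier D) ×ˢ Icc (0:ℝ) 1) ∧
  (∀ x ∈ frontier D, ∀ r ∈ Ico (0:ℝ) 1, γ (x, r) ∈ D) ∧
  (∀ x ∈ frontier D, γ (x, 1) = x) ∧
  ∀ x ∈ frontier D, fderiv ℝ ρ x (derivWithin (fun r => γ (x, r)) (Icc (0:ℝ) 1) 1) ≠ 0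

/-- Assumption (†): for all `r` close enough to `1`, `bD_r := γ(bD × {r})` bounds a strictly
pseudoconvex domain `D_r ⊆ D` whose defining function converges to `ρ` in `C²` norm on a
neighborhood `V` of `cl D` as `r → 1`. -/
def Dagger {N : ℕ} (D : Set (EN N)) (ρ : EN N → ℝ) (γ : EN N × ℝ → EN N) : Prop :=
  ∃ V : Set (EN N), IsOpen V ∧ closure D ⊆ V ∧
  ∃ (Dr : ℝ → Set (EN N)) (ρr : ℝ → EN N → ℝ),
    ∀ ε > 0, ∃ r₀ ∈ Ico (0:ℝ) 1, ∀ r ∈ Ioo r₀ 1,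
      StrictPSCWith (Dr r) (ρr r) ∧ Dr r ⊆ D ∧
      frontier (Dr r) = (fun x => γ (x, r)) '' frontier D ∧
      C2DistLt V (ρr r) ρ ε

/-- The `(2N-1)`-dimensional Hausdorff (surface) measure on `bD`. -/
def surfMeasure {N : ℕ} (D : Set (EN N)) : Measure (EN N) :=
  (Measure.hausdorffMeasure (2 * (N:ℝ) - 1)).restrict (frontier D)

/-- The normalized surface measure on `bD`. -/
def surfMeasureNorm {N : ℕ} (D : Set (EN N)) : Measure (EN N) :=
  ((Measure.hausdorffMeasure (2 * (N:ℝ) - 1) : Measure (EN N)) (frontier D))⁻¹ • surfMeasure D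

/-- The set `𝒲((r_j))` of `f ∈ 𝒪(D)` such that every measurable function on `bD` is an
a.e. limit of `f ∘ γ(·, r_{j_k})` along some subsequence of `(r_j)`. -/
def WSet {N : ℕ} (D : Set (EN N)) (γ : EN N × ℝ → EN N) (r : ℕ → ℝ) : Set ↥(Hol D) :=
  {f | ∀ h : EN N → ℂ, Measurable h → ∃ φ : ℕ → ℕ, StrictMono φ ∧
    ∀ᵐ x ∂ surfMeasure D, Tendsto (fun k => f.1 (γ (x, r (φ k)))) atTop (𝓝 (h x))}

/-- `Γ` is a closed cap of a convex set `V`: the closure of a connected component of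
`V \ H` for some real affine hyperplane `H` (for convex `V`, a nonempty open half-space
slice of `V`). -/
def IsClosedCap {N : ℕ} (V : Set (EN N)) (Γ : Set (EN N)) : Prop :=
  ∃ (l : EN N →L[ℝ] ℝ) (c : ℝ), l ≠ 0 ∧ (V ∩ {z | c < l z}).Nonempty ∧
    Γ = closure (V ∩ {z | c < l z})

/-- `V` is a strictly convex domain: a bounded convex domain with `C²` boundary whose
defining function has positive definite real Hessian on the real tangent space. -/
def StrictlyConvexDomain {N : ℕ} (V : Set (EN N)) : Prop :=
  IsDomainSet V ∧ Bornology.IsBounded V ∧ Convex ℝ V ∧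
  ∃ (ρ : EN N → ℝ) (W : Set (EN N)), IsDefiningFunctionOn V ρ W ∧
    ∀ p ∈ frontier V, ∀ w : EN N, w ≠ 0 → fderiv ℝ ρ p w = 0 → 0 < Hess ρ p w w

/-- The defining function `‖z‖² - 1` of the unit ball. -/
def ballRho {N : ℕ} : EN N → ℝ := fun z => ‖z‖ ^ 2 - 1

/-- The normalized surface measure on the unit sphere of `ℂ^N`. -/
def sphMeasure (N : ℕ) : Measure (EN N) :=
  ((Measure.hausdorffMeasure (2 * (N:ℝ) - 1) : Measure (EN N)) (Metric.sphere 0 1))⁻¹ •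
    (Measure.hausdorffMeasure (2 * (N:ℝ) - 1)).restrict (Metric.sphere 0 1)

/-- `v` is a weight: increasing on `[0,∞)`, nonnegative, and tending to `∞`. -/
def IsWeight (v : ℝ → ℝ) : Prop :=
  (∀ x ∈ Ici (0:ℝ), 0 ≤ v x) ∧ MonotoneOn v (Ici 0) ∧ Tendsto v atTop atTop

/-- The norm `‖f‖ = sup_{z ∈ 𝔹_N} |f z| / v(|z|)` of `H_v^0`. -/
def hvNorm {N : ℕ} (v : ℝ → ℝ) (f : EN N → ℂ) : ℝ :=
  ⨆ z ∈ Metric.ball (0:EN N) 1, ‖f z‖ / v ‖z‖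

/-- Membership in `H_v^0`: `f` is holomorphic on `𝔹_N` and `sup_{|z|=r} |f z| / v(r) → 0`
as `r → 1⁻`. -/
def MemHv {N : ℕ} (v : ℝ → ℝ) (f : EN N → ℂ) : Prop :=
  DifferentiableOn ℂ f (Metric.ball 0 1) ∧
  Tendsto (fun r : ℝ => ⨆ z ∈ Metric.sphere (0:EN N) r, ‖f z‖ / v r) (𝓝[<] 1) (𝓝 0)

/-- `S` contains, relatively to `H_v^0` with its norm topology, a dense `G_δ` subset:
there are countably many relatively norm-open sets `U n` whose intersection with `H_v^0`
is norm-dense in `H_v^0` and contained in `S`. -/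
def ResidualInHv {N : ℕ} (v : ℝ → ℝ) (S : Set (EN N → ℂ)) : Prop :=
  ∃ U : ℕ → Set (EN N → ℂ),
    (∀ n, ∀ f, MemHv v f → f ∈ U n →
      ∃ δ > 0, ∀ g, MemHv v g → hvNorm v (g - f) < δ → g ∈ U n) ∧
    (∀ f, MemHv v f → ∀ δ > 0, ∃ g, MemHv v g ∧ (∀ n, g ∈ U n) ∧ hvNorm v (g - f) < δ) ∧
    ∀ f, MemHv v f → (∀ n, f ∈ U n) → f ∈ S

/-- `S` is densely lineable in `H_v^0`: `S ∪ {0}` contains a norm-dense subspace of `H_v^0`. -/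
def DenselyLineableInHv {N : ℕ} (v : ℝ → ℝ) (S : Set (EN N → ℂ)) : Prop :=
  ∃ p : Submodule ℂ (EN N → ℂ), (↑p ⊆ {f : EN N → ℂ | MemHv v f}) ∧ (↑p ⊆ S ∪ {0}) ∧
    ∀ f, MemHv v f → ∀ δ > 0, ∃ g ∈ p, hvNorm v (g - f) < δ

/-- `S` is spaceable in `H_v^0`: `S ∪ {0}` contains a norm-closed infinite-dimensional
subspace of `H_v^0`. -/
def SpaceableInHv {N : ℕ} (v : ℝ → ℝ) (S : Set (EN N → ℂ)) : Prop :=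
  ∃ p : Submodule ℂ (EN N → ℂ), (↑p ⊆ {f : EN N → ℂ | MemHv v f}) ∧ (↑p ⊆ S ∪ {0}) ∧
    ¬ Module.Finite ℂ ↥p ∧
    ∀ f, MemHv v f → (∀ δ > 0, ∃ g ∈ p, hvNorm v (g - f) < δ) → f ∈ p

/-- The standing assumptions on the family `{γ_z : z ∈ 𝔹_N}`: each `γ_z` is a `C¹` map
`b𝔹_N × [0,1] → cl 𝔹_N` into `𝔹_N` for `r < 1` with `γ_z(x,1) = x`, transversal approach
and (†), with joint continuity of `(z,x,r) ↦ γ_z(x,r)` and of `(z,r) ↦ ∂γ_z(x,r)/∂r`. -/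
def BallGammaFamily {N : ℕ} (γ : EN N → EN N × ℝ → EN N) : Prop :=
  (∀ z ∈ Metric.ball (0:EN N) 1,
    GammaMap (Metric.ball 0 1) ballRho (γ z) 1 ∧ Dagger (Metric.ball 0 1) ballRho (γ z)) ∧
  ContinuousOn (fun p : EN N × (EN N × ℝ) => γ p.1 p.2)
    (Metric.ball 0 1 ×ˢ (Metric.sphere 0 1 ×ˢ Icc (0:ℝ) 1)) ∧
  ∀ x ∈ Metric.sphere (0:EN N) 1,
    ContinuousOn (fun p : EN N × ℝ => derivWithin (fun r => γ p.1 (x, r)) (Icc (0:ℝ) 1) p.2)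
      (Metric.ball 0 1 ×ˢ Icc (0:ℝ) 1)

/-- The set of `f` such that for every `z ∈ 𝔹_N`, every measurable function on `b𝔹_N` is an
a.e. limit of `f ∘ γ_z(·, r_{j_k})` along some subsequence of `(r_j)`. -/
def WSetHv {N : ℕ} (γ : EN N → EN N × ℝ → EN N) (r : ℕ → ℝ) : Set (EN N → ℂ) :=
  {f | ∀ z ∈ Metric.ball (0:EN N) 1, ∀ h : EN N → ℂ, Measurable h →
    ∃ φ : ℕ → ℕ, StrictMono φ ∧
      ∀ᵐ x ∂ sphMeasure N, Tendsto (fun k => f (γ z (x, r (φ k)))) atTop (𝓝 (h x))}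

/-- The set `E_L^* = {γ_z(x,r) : x ∈ E, r ∈ [0,1], z ∈ L}`. -/
def EStarSet {N : ℕ} (γ : EN N → EN N × ℝ → EN N) (L E : Set (EN N)) : Set (EN N) :=
  {w | ∃ z ∈ L, ∃ x ∈ E, ∃ r ∈ Icc (0:ℝ) 1, w = γ z (x, r)}

/-- The Korányi approach region `D_α(x)`. -/
def Koranyi {N : ℕ} (α : ℝ) (x : EN N) : Set (EN N) :=
  {z ∈ Metric.ball (0:EN N) 1 | ‖1 - (⟪x, z⟫_ℂ : ℂ)‖ < α / 2 * (1 - ‖z‖ ^ 2)}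

/-- `h` has a `K`-limit at `x`: for every `α > 1` the values of `h` converge along every
sequence in `D_α(x)` converging to `x`. -/
def HasKLimitAt {N : ℕ} (h : EN N → ℂ) (x : EN N) : Prop :=
  ∀ α > (1:ℝ), ∃ c : ℂ, ∀ z : ℕ → EN N, (∀ i, z i ∈ Koranyi α x) →
    Tendsto z atTop (𝓝 x) → Tendsto (fun i => h (z i)) atTop (𝓝 c)

/-- The circle `bL_x = L_x ∩ b𝔹_N` cut out on the complex line through `x` and `0`. -/
def lineCircle {N : ℕ} (x : EN N) : Set (EN N) :=
  {z | ∃ t : ℂ, z = t • x} ∩ Metric.sphere 0 1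

end
theorem aux_frontier_comp {X : Set ℂ} (hX : IsClosed X) (w : ℂ) :
    frontier (connectedComponentIn Xᶜ w) ⊆ X := by
  intro z hz
  by_contra hzX
  have hV : IsOpen (connectedComponentIn Xᶜ w) := hX.isOpen_compl.connectedComponentIn
  have hW : IsOpen (connectedComponentIn Xᶜ z) := hX.isOpen_compl.connectedComponentIn
  rw [hV.frontier_eq] at hz
  obtain ⟨y, hy1, hy2⟩ := mem_closure_iff.1 hz.1 _ hW (mem_connectedComponentIn hzX)
  apply hz.2
  rw [connectedComponentIn_eq hy2, ← connectedComponentIn_eq hy1]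
  exact mem_connectedComponentIn hzX

theorem aux_log_of_unbounded {A : Set ℂ} (hA : IsCompact A) {w : ℂ}
    (hu : ¬ Bornology.IsBounded (connectedComponentIn Aᶜ w)) :
    ∃ g : ℂ → ℂ, ContinuousOn g A ∧ ∀ z ∈ A, Complex.exp (g z) = z - w := by
  have hw : w ∈ Aᶜ := by
    by_contra h
    rw [connectedComponentIn_eq_empty h] at hu
    exact hu Bornology.isBounded_empty
  obtain ⟨R, hR⟩ := hA.isBounded.exists_norm_le
  obtain ⟨w', hw'U, hw'⟩ : ∃ w' ∈ connectedComponentIn Aᶜ w, max R 0 < ‖w'‖ := by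
    by_contra! h
    exact hu (isBounded_iff_forall_norm_le.2 ⟨_, h⟩)
  have hRw : R < ‖w'‖ := (le_max_left _ _).trans_lt hw'
  have hw0 : w' ≠ 0 := by
    rintro rfl
    simp at hw'
  have key := (isPreconnected_connectedComponentIn (x := w) (F := Aᶜ)).induction₂
    (fun x y => ∃ g : ℂ → ℂ, ContinuousOn g A ∧ ∀ z ∈ A, Complex.exp (g z) * (z - x) = z - y)
    ?_ ?_ ?_ hw'U (mem_connectedComponentIn hw)
  · obtain ⟨g, hg, hgz⟩ := key
    refine ⟨fun z => g z + (Complex.log (1 - z / w') + Complex.log (-w')), ?_, ?_⟩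
    · refine hg.add (ContinuousOn.add ?_ continuousOn_const)
      refine ContinuousOn.clog (by fun_prop) fun z hz => ?_
      left
      have h1 : ‖z / w'‖ < 1 := by
        rw [norm_div, div_lt_one (norm_pos_iff.2 hw0)]
        exact (hR z hz).trans_lt hRw
      have h2 := (Complex.re_le_norm (z / w')).trans_lt h1
      simp only [Complex.sub_re, Complex.one_re]
      linarith
    · intro z hz
      have h3 : (1 - z / w') ≠ 0 := by
        intro h
        have : z = w' := by
          field_simp at h
          linear_combination -h
        have := hR z hz
        subst_vars
        linarith
      rw [Complex.exp_add, Complex.exp_add, Complex.exp_log h3, Complex.exp_log (neg_ne_zero.2 hw0)]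
      rw [← hgz z hz]
      field_simp
      ring
  · intro x hx
    have hxA : x ∈ Aᶜ := connectedComponentIn_subset _ _ hx
    obtain ⟨ε, hε, hball⟩ := Metric.isOpen_iff.1 hA.isClosed.isOpen_compl x hxA
    filter_upwards [mem_nhdsWithin_of_mem_nhds (Metric.ball_mem_nhds x hε)] with y hy
    have hne : ∀ z ∈ A, z - x ≠ 0 := fun z hz h => hxA (by rwa [← sub_eq_zero.1 h])
    refine ⟨fun z => Complex.log (1 - (y - x) / (z - x)), ?_, ?_⟩
    · refine ContinuousOn.clog ?_ fun z hz => ?_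
      · exact continuousOn_const.sub (continuousOn_const.div (by fun_prop) hne)
      left
      have h1 : ‖(y - x) / (z - x)‖ < 1 := by
        rw [norm_div, div_lt_one (norm_pos_iff.2 (hne z hz))]
        have h5 : ε ≤ ‖z - x‖ := by
          by_contra! h
          exact hball (mem_ball_iff_norm.2 h) hz
        exact (mem_ball_iff_norm.1 hy).trans_le h5
      have h2 := (Complex.re_le_norm ((y - x) / (z - x))).trans_lt h1
      simp only [Complex.sub_re, Complex.one_re]
      linarith
    · intro z hz
      have hzy : z - y ≠ 0 := by
        intro h
        rw [sub_eq_zero.1 h] at hz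
        exact hball hy hz
      have h3 : (1 - (y - x) / (z - x)) = (z - y) / (z - x) := by
        have := hne z hz
        field_simp
        ring
      simp only
      rw [h3, Complex.exp_log (div_ne_zero hzy (hne z hz)), div_mul_cancel₀ _ (hne z hz)]
  · rintro x y z hx hy hz ⟨g, hg, hgz⟩ ⟨k, hk, hkz⟩
    refine ⟨fun t => k t + g t, hk.add hg, fun t ht => ?_⟩
    rw [Complex.exp_add, mul_assoc, hgz t ht, hkz t ht]
  · rintro x y hx hy ⟨g, hg, hgz⟩
    refine ⟨fun t => - g t, hg.neg, fun t ht => ?_⟩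
    rw [← hgz t ht, ← mul_assoc, ← Complex.exp_add]
    simp

theorem aux_sc : IsSimplyConnected (univ : Set ℂ) := by
  have : ContractibleSpace (univ : Set ℂ) := convex_univ.contractibleSpace univ_nonempty
  change SimplyConnectedSpace (univ : Set ℂ)
  infer_instance

theorem aux_unbounded_of_log {X : Set ℂ} (hX : IsCompact X) {w : ℂ} (hw : w ∉ X) {g : ℂ → ℂ}
    (hg : ContinuousOn g X) (hgz : ∀ z ∈ X, Complex.exp (g z) = z - w) :
    ¬ Bornology.IsBounded (connectedComponentIn Xᶜ w) := by
  classical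
  intro hb
  set V := connectedComponentIn Xᶜ w with hVdef
  have hV : IsOpen V := hX.isClosed.isOpen_compl.connectedComponentIn
  have hfr : frontier V ⊆ X := aux_frontier_comp hX.isClosed w
  have hwV : w ∈ V := mem_connectedComponentIn hw
  obtain ⟨G, hG⟩ := ContinuousMap.exists_restrict_eq hX.isClosed
    (⟨X.domRestrict g, continuousOn_iff_continuous_domRestrict.1 hg⟩ : C(X, ℂ))
  have hGz : ∀ z ∈ X, G z = g z := fun z hz => by
    have := DFunLike.congr_fun hG ⟨z, hz⟩
    simpa using this
  let f : ℂ → ℂ := fun z => if z ∈ closure V then Complex.exp (G z) else z - w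
  have hf : Continuous f := by
    refine Continuous.if (fun a ha => ?_) (by fun_prop) (by fun_prop)
    have haX : a ∈ X := hfr (frontier_closure_subset ha)
    rw [hGz a haX, hgz a haX]
  have hf0 : ∀ z, f z ≠ 0 := by
    intro z
    by_cases hz : z ∈ closure V
    · simp [f, hz, Complex.exp_ne_zero]
    · simp only [f, hz, if_false]
      intro h
      rw [sub_eq_zero.1 h] at hz
      exact hz (subset_closure hwV)
  obtain ⟨R, hR0, hR⟩ : ∃ R : ℝ, 0 < R ∧ ∀ z ∈ closure V, ‖z - w‖ < R := by
    obtain ⟨R, hR⟩ := hb.closure.exists_norm_le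
    refine ⟨max R 0 + ‖w‖ + 1, by positivity, fun z hz => ?_⟩
    have := norm_sub_le z w
    have := hR z hz
    have := le_max_left R 0
    linarith
  obtain ⟨F, hF, hFe⟩ := Complex.exists_continuousOn_eqOn_exp_comp (U := (univ : Set ℂ))
    (g := f) aux_sc isOpen_univ hf.continuousOn (by rintro ⟨z, -, h⟩; exact hf0 z h)
  rw [continuousOn_univ] at hF
  have hcirc : ∀ t : ℝ, Complex.exp (F (w + R * Complex.exp (t * Complex.I))) =
      R * Complex.exp (t * Complex.I) := by
    intro t
    have h1 := hFe (mem_univ (w + R * Complex.exp (t * Complex.I)))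
    simp only [Function.comp] at h1
    rw [h1]
    have : w + R * Complex.exp (t * Complex.I) ∉ closure V := by
      intro h
      have := hR _ h
      simp [Complex.norm_exp_ofReal_mul_I, abs_of_pos hR0] at this
    simp [f, this]
  let H : ℝ → ℂ := fun t => (F (w + R * Complex.exp (t * Complex.I)) - t * Complex.I - Complex.log R)
    / (2 * Real.pi * Complex.I)
  have hHc : Continuous H := by fun_prop
  have hHint : ∀ t, ∃ n : ℤ, H t = n := by
    intro t
    have hRC : (R : ℂ) ≠ 0 := by exact_mod_cast hR0.ne'
    have h1 : Complex.exp (F (w + R * Complex.exp (t * Complex.I)) - t * Complex.I - Complex.log R) = 1 := by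
      rw [Complex.exp_sub, Complex.exp_sub, hcirc, Complex.exp_log hRC]
      have := Complex.exp_ne_zero (t * Complex.I)
      field_simp
    obtain ⟨n, hn⟩ := Complex.exp_eq_one_iff.1 h1
    refine ⟨n, ?_⟩
    simp only [H]
    rw [hn]
    have := Complex.two_pi_I_ne_zero
    field_simp
  have hconst : H 0 = H (2 * Real.pi) := by
    choose n hn using hHint
    have hnc : Continuous n := by
      rw [Int.isClosedEmbedding_coe_real.isEmbedding.continuous_iff]
      have : (fun t => (n t : ℝ)) = fun t => (H t).re := by
        ext t
        rw [hn t]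
        simp
      change Continuous (fun t => (n t : ℝ))
      rw [this]
      exact Complex.continuous_re.comp hHc
    rw [hn, hn, PreconnectedSpace.constant inferInstance hnc (x := 0) (y := 2 * Real.pi)]
  simp only [H] at hconst
  push_cast at hconst
  rw [Complex.exp_two_pi_mul_I, zero_mul, Complex.exp_zero] at hconst
  have := Complex.two_pi_I_ne_zero
  field_simp at hconst
  exact this (by linear_combination hconst)

theorem aux_bs_le {α : Type*} {K : Set α} {h : α → ℝ} {C : ℝ} (hC : 0 ≤ C)
    (hb : ∀ x ∈ K, h x ≤ C) : ⨆ w ∈ K, h w ≤ C :=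
  Real.iSup_le (fun x => Real.iSup_le (fun hx => hb x hx) hC) hC

theorem aux_le_bs {α : Type*} {K : Set α} {h : α → ℝ} {C : ℝ} (hC : 0 ≤ C)
    (hb : ∀ x ∈ K, h x ≤ C) {w : α} (hw : w ∈ K) : h w ≤ ⨆ w ∈ K, h w := by
  have h1 : h w = ⨆ (_ : w ∈ K), h w := by simp [hw]
  rw [h1]
  refine le_ciSup (f := fun w => ⨆ (_ : w ∈ K), h w) ⟨C, ?_⟩ w
  rintro _ ⟨x, rfl⟩
  exact Real.iSup_le (fun hx => hb x hx) hC

theorem aux_bdd {α : Type*} [TopologicalSpace α] {K : Set α} (hK : IsCompact K) {φ : α → ℂ}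
    (hφ : ContinuousOn φ K) : ∃ C, 0 ≤ C ∧ ∀ x ∈ K, ‖φ x‖ ≤ C := by
  obtain ⟨C, hC⟩ := hK.exists_bound_of_continuousOn hφ
  exact ⟨max C 0, le_max_right _ _, fun x hx => (hC x hx).trans (le_max_left _ _)⟩

theorem aux_subset_hull {E : Set ℂ} (hE : IsCompact E) : E ⊆ polyHull1 E := by
  intro z hz p
  obtain ⟨C, hC, h⟩ := aux_bdd hE (φ := fun z => p.eval z) p.continuous.continuousOn
  exact aux_le_bs hC h hz

theorem aux_hull_compact {E : Set ℂ} (hE : IsCompact E) : IsCompact (polyHull1 E) := by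
  refine Metric.isCompact_of_isClosed_isBounded ?_ ?_
  · simp only [polyHull1, ofPred_forall]
    refine isClosed_iInter fun p => isClosed_le ?_ continuous_const
    exact p.continuous.norm
  · refine isBounded_iff_forall_norm_le.2 ⟨⨆ w ∈ E, ‖w‖, fun z hz => ?_⟩
    simpa using hz Polynomial.X

theorem aux_hull_unbounded {E : Set ℂ} (hE : IsCompact E) {w : ℂ} (hw : w ∉ polyHull1 E) :
    ¬ Bornology.IsBounded (connectedComponentIn (polyHull1 E)ᶜ w) := by
  intro hb
  apply hw
  intro p
  refine Complex.norm_le_of_forall_mem_frontier_norm_le hb (f := fun z => p.eval z)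
    p.differentiable.diffContOnCl (fun z hz => ?_)
    (subset_closure (mem_connectedComponentIn hw))
  exact aux_frontier_comp (aux_hull_compact hE).isClosed w hz p

theorem aux_union_unbounded {A B : Set ℂ} (hA : IsCompact A) (hB : IsCompact B)
    (hAB : Disjoint A B)
    (hAu : ∀ w ∉ A, ¬ Bornology.IsBounded (connectedComponentIn Aᶜ w))
    (hBu : ∀ w ∉ B, ¬ Bornology.IsBounded (connectedComponentIn Bᶜ w))
    (w : ℂ) (hw : w ∉ A ∪ B) :
    ¬ Bornology.IsBounded (connectedComponentIn (A ∪ B)ᶜ w) := by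
  classical
  obtain ⟨g, hg, hgz⟩ := aux_log_of_unbounded hA (hAu w fun h => hw (Or.inl h))
  obtain ⟨k, hk, hkz⟩ := aux_log_of_unbounded hB (hBu w fun h => hw (Or.inr h))
  have h1 : ∀ z ∈ A, (if z ∈ A then g z else k z) = g z := fun z hz => if_pos hz
  have h2 : ∀ z ∈ B, (if z ∈ A then g z else k z) = k z := fun z hz =>
    if_neg fun h => disjoint_left.1 hAB h hz
  refine aux_unbounded_of_log (hA.union hB) hw (g := fun z => if z ∈ A then g z else k z) ?_ ?_
  · exact ContinuousOn.union_of_isClosed (hg.congr h1) (hk.congr h2) hA.isClosed hB.isClosed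
  · rintro z (hz | hz)
    · simp only [h1 z hz, hgz z hz]
    · simp only [h2 z hz, hkz z hz]

open Polynomial in
theorem aux_inverse_mem {X : Set ℂ} [CompactSpace X]
    (hu : ∀ w ∉ X, ¬ Bornology.IsBounded (connectedComponentIn Xᶜ w)) (w : ℂ) (hw : w ∉ X) :
    Ring.inverse (algebraMap ℂ C(X, ℂ) w - ⟨fun z => (z : ℂ), by fun_prop⟩) ∈
      (polynomialFunctions X).topologicalClosure := by
  set S := (polynomialFunctions X).topologicalClosure with hS
  have hScl : IsClosed (S : Set C(X, ℂ)) := Subalgebra.isClosed_topologicalClosure _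
  set x : C(X, ℂ) := ⟨fun z => (z : ℂ), by fun_prop⟩ with hx
  have hxS : x ∈ S := by
    refine Subalgebra.le_topologicalClosure _ ?_
    refine ⟨Polynomial.X, by simp, ?_⟩
    ext z
    simp [hx]
  have hspec : spectrum ℂ x = X := by
    rw [ContinuousMap.spectrum_eq_range]
    simp [hx]
  have hn : w ∉ spectrum ℂ (⟨x, hxS⟩ : S) := by
    intro h
    have := Subalgebra.spectrum_isBounded_connectedComponentIn S ⟨x, hxS⟩ h
    simp only [hspec] at this
    exact hu w hw this
  rw [spectrum.notMem_iff] at hn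
  obtain ⟨u, hu⟩ := hn
  have h1 : algebraMap ℂ C(X, ℂ) w - x = (Units.map (S.subtype : S →* C(X, ℂ)) u : C(X, ℂ)) := by
    simp [hu]
  rw [h1, Ring.inverse_unit, ← map_inv]
  exact (u⁻¹ : Sˣ).1.2

/-- Twice the Cauchy-Riemann operator. -/
noncomputable def auxDbar (f : ℂ → ℂ) (w : ℂ) : ℂ := fderiv ℝ f w 1 + Complex.I * fderiv ℝ f w Complex.I

theorem auxDbar_zero_of_const {f : ℂ → ℂ} {z c : ℂ} (h : f =ᶠ[𝓝 z] fun _ => c) :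
    auxDbar f =ᶠ[𝓝 z] fun _ => 0 := by
  filter_upwards [h.eventuallyEq_nhds] with w hw
  simp [auxDbar, hw.fderiv_eq]

theorem auxDbar_continuous {f : ℂ → ℂ} (hf : ContDiff ℝ 1 f) : Continuous (auxDbar f) := by
  have := hf.continuous_fderiv one_ne_zero
  unfold auxDbar
  fun_prop

theorem auxDbar_cs {f : ℂ → ℂ} (hf : HasCompactSupport f) : HasCompactSupport (auxDbar f) := by
  have h1 := hf.fderiv (𝕜 := ℝ)
  refine h1.mono fun w hw => ?_
  rw [Function.mem_support] at hw ⊢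
  intro h
  exact hw (by simp [auxDbar, h])

theorem auxDbar_integral {f : ℂ → ℂ} (hf : ContDiff ℝ 1 f) (hc : HasCompactSupport f) :
    ∫ w, auxDbar f w = 0 := by
  have hcont := hf.continuous_fderiv one_ne_zero
  have hfInt : ∀ v, Integrable (fun w => fderiv ℝ f w v) := fun v => by
    refine Continuous.integrable_of_hasCompactSupport (by fun_prop) ?_
    exact (hc.fderiv (𝕜 := ℝ)).comp_left (g := fun L : ℂ →L[ℝ] ℂ => L v) (by simp)
  have hf_int : Integrable f := hf.continuous.integrable_of_hasCompactSupport hc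
  have key : ∀ v, ∫ w, fderiv ℝ f w v = 0 := fun v => by
    have := integral_mul_fderiv_eq_neg_fderiv_mul_of_integrable (μ := (volume : Measure ℂ))
      (f := fun _ : ℂ => (1 : ℂ)) (g := f) (v := v) (by simp) (by simpa using hfInt v)
      (by simpa using hf_int) (by simp) (fun x _ => hf.differentiable one_ne_zero x)
    simpa using this
  unfold auxDbar
  rw [integral_add (hfInt _) ((hfInt _).const_mul _), integral_const_mul, key, key]
  simp

theorem auxDbar_mul_inv {f : ℂ → ℂ} {w z : ℂ} (hf : DifferentiableAt ℝ f w) (hz : w ≠ z) :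
    auxDbar (fun w => f w * (w - z)⁻¹) w = auxDbar f w * (w - z)⁻¹ := by
  have h1 : HasDerivAt (fun w : ℂ => (w - z)⁻¹) (-1 / (w - z) ^ 2) w :=
    ((hasDerivAt_id w).sub_const z).inv (sub_ne_zero.2 hz)
  have h2 := h1.hasFDerivAt.restrictScalars ℝ
  have h3 := (hf.hasFDerivAt.mul h2).fderiv
  unfold auxDbar
  have h4 : fderiv ℝ (fun w => f w * (w - z)⁻¹) w = _ := h3
  rw [h4]
  simp
  ring_nf
  simp [Complex.I_sq]

theorem auxDbar_kernel_continuous {f : ℂ → ℂ} (hf : ContDiff ℝ 1 f) {z c : ℂ}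
    (h : f =ᶠ[𝓝 z] fun _ => c) : Continuous fun w => auxDbar f w * (w - z)⁻¹ := by
  rw [continuous_iff_continuousAt]
  intro w
  by_cases hw : w = z
  · subst hw
    have : (fun w' => auxDbar f w' * (w' - w)⁻¹) =ᶠ[𝓝 w] fun _ => 0 := by
      filter_upwards [auxDbar_zero_of_const h] with w' h'
      simp [h']
    exact (continuousAt_congr this).2 continuousAt_const
  · refine (auxDbar_continuous hf).continuousAt.mul ?_
    exact ContinuousAt.inv₀ (by fun_prop) (sub_ne_zero.2 hw)

theorem auxDbar_kernel_integrable {f : ℂ → ℂ} (hf : ContDiff ℝ 1 f) (hc : HasCompactSupport f)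
    {z c : ℂ} (h : f =ᶠ[𝓝 z] fun _ => c) : Integrable fun w => auxDbar f w * (w - z)⁻¹ :=
  (auxDbar_kernel_continuous hf h).integrable_of_hasCompactSupport (auxDbar_cs hc).mul_right

theorem auxDbar_kernel_zero {f : ℂ → ℂ} (hf : ContDiff ℝ 1 f) (hc : HasCompactSupport f)
    {z : ℂ} (h : f =ᶠ[𝓝 z] fun _ => 0) : ∫ w, auxDbar f w * (w - z)⁻¹ = 0 := by
  have h0 : (fun w => f w * (w - z)⁻¹) =ᶠ[𝓝 z] fun _ => 0 := by
    filter_upwards [h] with w hw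
    simp [hw]
  have hcd : ContDiff ℝ 1 (fun w => f w * (w - z)⁻¹) := by
    rw [contDiff_iff_contDiffAt]
    intro w
    by_cases hw : w = z
    · subst hw
      exact contDiffAt_const.congr_of_eventuallyEq h0
    · refine hf.contDiffAt.mul ?_
      exact ContDiffAt.inv (by fun_prop) (sub_ne_zero.2 hw)
  rw [← auxDbar_integral hcd hc.mul_right]
  congr 1
  ext w
  by_cases hw : w = z
  · subst hw
    rw [(auxDbar_zero_of_const h0).self_of_nhds]
    simp
  · rw [auxDbar_mul_inv (hf.differentiable one_ne_zero w) hw]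

/-- a radial bump function -/
noncomputable def auxEta (w : ℂ) : ℂ := (Real.smoothTransition (2 - ‖w‖ ^ 2) : ℝ)

theorem auxEta_contDiff : ContDiff ℝ 1 auxEta := by
  unfold auxEta
  refine Complex.ofRealCLM.contDiff.comp ?_
  refine Real.smoothTransition.contDiff.comp ?_
  exact contDiff_const.sub (contDiff_norm_sq ℝ)

theorem auxEta_cs : HasCompactSupport auxEta := by
  refine HasCompactSupport.intro (isCompact_closedBall (0 : ℂ) 2) fun w hw => ?_
  simp only [mem_closedBall, dist_zero_right, not_le] at hw
  unfold auxEta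
  rw [Real.smoothTransition.zero_of_nonpos (by nlinarith)]
  simp

theorem auxEta_one : auxEta =ᶠ[𝓝 0] fun _ => 1 := by
  filter_upwards [Metric.ball_mem_nhds (0 : ℂ) one_pos] with w hw
  simp only [mem_ball, dist_zero_right] at hw
  unfold auxEta
  rw [Real.smoothTransition.one_of_one_le (by nlinarith [norm_nonneg w])]
  simp

theorem auxEta_dbar (w : ℂ) :
    auxDbar auxEta w = ((-2 * deriv Real.smoothTransition (2 - ‖w‖ ^ 2) : ℝ) : ℂ) * w := by
  have h1 : HasDerivAt Real.smoothTransition (deriv Real.smoothTransition (2 - ‖w‖ ^ 2))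
      (2 - ‖w‖ ^ 2) :=
    ((Real.smoothTransition.contDiff (n := 1)).differentiable one_ne_zero _).hasDerivAt
  have h2 := (hasStrictFDerivAt_norm_sq w).hasFDerivAt.const_sub (2 : ℝ)
  have h3 := h1.comp_hasFDerivAt w h2
  have h4 := (Complex.ofRealCLM.hasFDerivAt.comp w h3).fderiv
  have h5 : fderiv ℝ auxEta w = _ := h4
  unfold auxDbar
  rw [h5]
  apply Complex.ext <;> simp [Complex.inner] <;> ring

theorem auxEta_const : ∫ w, auxDbar auxEta w * (w - 0)⁻¹ ≠ 0 := by
  have hcont : Continuous (deriv Real.smoothTransition) :=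
    (Real.smoothTransition.contDiff (n := 1)).continuous_deriv le_rfl
  have hnn : ∀ t, 0 ≤ deriv Real.smoothTransition t := fun t =>
    Real.smoothTransition.monotone.deriv_nonneg
  have h1 : ∀ w, auxDbar auxEta w * (w - 0)⁻¹ =
      ((-2 * deriv Real.smoothTransition (2 - ‖w‖ ^ 2) : ℝ) : ℂ) := by
    intro w
    by_cases hw : w = 0
    · subst hw
      have h2 : Real.smoothTransition =ᶠ[𝓝 (2 : ℝ)] fun _ => 1 := by
        filter_upwards [Ioi_mem_nhds (show (1 : ℝ) < 2 by norm_num)] with t ht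
        exact Real.smoothTransition.one_of_one_le (le_of_lt ht)
      simp [h2.deriv_eq]
    · rw [auxEta_dbar, sub_zero, mul_assoc, mul_inv_cancel₀ hw, mul_one]
  simp_rw [h1]
  rw [integral_complex_ofReal, integral_const_mul]
  have hpos : 0 < ∫ w : ℂ, deriv Real.smoothTransition (2 - ‖w‖ ^ 2) := by
    obtain ⟨c, hc, hc'⟩ := exists_deriv_eq_slope Real.smoothTransition (zero_lt_one' ℝ)
      (Real.smoothTransition.contDiff (n := 1)).continuous.continuousOn
      ((Real.smoothTransition.contDiff (n := 1)).differentiable one_ne_zero).differentiableOn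
    refine Continuous.integral_pos_of_hasCompactSupport_nonneg_nonzero
      (x := ((Real.sqrt (2 - c) : ℝ) : ℂ)) (by fun_prop) ?_ (fun w => hnn _) ?_
    · refine HasCompactSupport.intro (isCompact_closedBall (0 : ℂ) 2) fun w hw => ?_
      simp only [mem_closedBall, dist_zero_right, not_le] at hw
      have h2 : Real.smoothTransition =ᶠ[𝓝 (2 - ‖w‖ ^ 2 : ℝ)] fun _ => 0 := by
        filter_upwards [Iio_mem_nhds (show (2 - ‖w‖ ^ 2 : ℝ) < 0 by nlinarith)] with t ht
        exact Real.smoothTransition.zero_of_nonpos (le_of_lt ht)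
      simp [h2.deriv_eq]
    · have : (2 : ℝ) - ‖((Real.sqrt (2 - c) : ℝ) : ℂ)‖ ^ 2 = c := by
        rw [Complex.norm_real, Real.norm_eq_abs, sq_abs, Real.sq_sqrt (by linarith [hc.2])]
        ring
      rw [this, hc']
      simp
  exact_mod_cast (mul_neg_of_neg_of_pos (by norm_num) hpos).ne

theorem auxDbar_kernel {f : ℂ → ℂ} (hf : ContDiff ℝ 1 f) (hc : HasCompactSupport f)
    {z c : ℂ} (h : f =ᶠ[𝓝 z] fun _ => c) :
    ∫ w, auxDbar f w * (w - z)⁻¹ = c * ∫ w, auxDbar auxEta w * (w - 0)⁻¹ := by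
  have hcd : ContDiff ℝ 1 fun w => auxEta (w - z) :=
    auxEta_contDiff.comp (contDiff_id.sub contDiff_const)
  have hcs : HasCompactSupport fun w => auxEta (w - z) :=
    auxEta_cs.comp_homeomorph (Homeomorph.subRight z)
  have h1 : (fun w => auxEta (w - z)) =ᶠ[𝓝 z] fun _ => 1 := by
    have : Tendsto (fun w => w - z) (𝓝 z) (𝓝 0) := by
      have : Continuous fun w : ℂ => w - z := by fun_prop
      simpa using this.tendsto z
    exact this.eventually auxEta_one
  have hd : ∀ w, auxDbar (fun w => auxEta (w - z)) w = auxDbar auxEta (w - z) := fun w => by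
    unfold auxDbar
    rw [fderiv_comp_sub]
  have hD : ∀ w, auxDbar (fun w => f w - c * auxEta (w - z)) w =
      auxDbar f w - c * auxDbar (fun w => auxEta (w - z)) w := fun w => by
    unfold auxDbar
    have e1 := hf.differentiable one_ne_zero w
    have e2 := hcd.differentiable one_ne_zero w
    rw [fderiv_fun_sub e1 (e2.const_mul c), fderiv_const_mul e2]
    simp
    ring
  have h2 := auxDbar_kernel_zero (f := fun w => f w - c * auxEta (w - z)) (z := z)
    (hf.sub (contDiff_const.mul hcd)) (hc.sub hcs.mul_left) (by
      filter_upwards [h, h1] with w e1 e2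
      simp [e1, e2])
  have e : ∀ w, auxDbar (fun w => f w - c * auxEta (w - z)) w * (w - z)⁻¹ =
    auxDbar f w * (w - z)⁻¹ - c * (auxDbar (fun w => auxEta (w - z)) w * (w - z)⁻¹) := fun w => by
      rw [hD]; ring
  simp_rw [e] at h2
  rw [integral_sub (auxDbar_kernel_integrable hf hc h)
    ((auxDbar_kernel_integrable hcd hcs h1).const_mul c), integral_const_mul, sub_eq_zero] at h2
  rw [h2]
  congr 1
  simp_rw [hd]
  have := integral_sub_right_eq_self (μ := (volume : Measure ℂ))
    (fun w => auxDbar auxEta w * (w - 0)⁻¹) z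
  simpa using this

theorem aux_separate {A B : Set ℂ} (hA : IsCompact A) (hB : IsCompact B)
    (hAB : Disjoint A B)
    (hu : ∀ w ∉ A ∪ B, ¬ Bornology.IsBounded (connectedComponentIn (A ∪ B)ᶜ w))
    {ε : ℝ} (hε : 0 < ε) :
    ∃ p : Polynomial ℂ, (∀ z ∈ A, ‖p.eval z - 1‖ < ε) ∧ ∀ z ∈ B, ‖p.eval z‖ < ε := by
  obtain ⟨R, hR⟩ := hA.isBounded.exists_norm_le
  obtain ⟨χ₀, h0, h1, -⟩ := exists_contMDiffMap_zero_one_nhds_of_isClosed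
    (modelWithCornersSelf ℝ ℂ) (n := 1) (s := B ∪ (ball (0 : ℂ) (R + 1))ᶜ) (t := A)
    (hB.isClosed.union isOpen_ball.isClosed_compl) hA.isClosed (by
      rw [disjoint_union_left]
      refine ⟨hAB.symm, ?_⟩
      rw [disjoint_left]
      intro z hz hzA
      apply hz
      rw [mem_ball_zero_iff]
      linarith [hR z hzA])
  have hχ₀ : ContDiff ℝ 1 χ₀ := χ₀.contMDiff.contDiff
  set χ : ℂ → ℂ := fun w => (χ₀ w : ℂ) with hχdef
  have hχ : ContDiff ℝ 1 χ := Complex.ofRealCLM.contDiff.comp hχ₀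
  rw [eventually_nhdsSet_iff_forall] at h0 h1
  have hcs : HasCompactSupport χ := by
    refine HasCompactSupport.intro (isCompact_closedBall (0 : ℂ) (R + 1)) fun w hw => ?_
    have := (h0 w (Or.inr fun h => hw (ball_subset_closedBall h))).self_of_nhds
    simp [χ, this]
  have hχA : ∀ z ∈ A, χ =ᶠ[𝓝 z] fun _ => 1 := fun z hz => by
    filter_upwards [h1 z hz] with w hw
    simp [χ, hw]
  have hχB : ∀ z ∈ B, χ =ᶠ[𝓝 z] fun _ => 0 := fun z hz => by
    filter_upwards [h0 z (Or.inl hz)] with w hw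
    simp [χ, hw]
  have hχX : ∀ z ∈ A ∪ B, χ =ᶠ[𝓝 z] fun _ => χ z := by
    rintro z (hz | hz)
    · have := hχA z hz
      rwa [this.self_of_nhds]
    · have := hχB z hz
      rwa [this.self_of_nhds]
  have : CompactSpace (A ∪ B : Set ℂ) := isCompact_iff_compactSpace.1 (hA.union hB)
  have hmem := aux_inverse_mem hu
  set S := (polynomialFunctions (A ∪ B)).topologicalClosure with hS
  have hScl : IsClosed (S : Set C((A ∪ B : Set ℂ), ℂ)) := Subalgebra.isClosed_topologicalClosure _
  have : CompleteSpace S := hScl.completeSpace_coe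
  set x : C((A ∪ B : Set ℂ), ℂ) := ⟨fun z => (z : ℂ), by fun_prop⟩ with hx
  have hxz : ∀ z, x z = z := fun z => rfl
  have hunit : ∀ w ∉ A ∪ B, IsUnit (algebraMap ℂ C((A ∪ B : Set ℂ), ℂ) w - x) := by
    intro w hw
    rw [ContinuousMap.isUnit_iff_forall_ne_zero]
    intro z hz
    apply hw
    have : w = z := by simpa [hxz, sub_eq_zero] using hz
    rw [this]
    exact z.2
  have hinv : ∀ w ∉ A ∪ B, ∀ z, Ring.inverse (algebraMap ℂ C((A ∪ B : Set ℂ), ℂ) w - x) z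
      = (w - z)⁻¹ := by
    intro w hw z
    have h := Ring.mul_inverse_cancel _ (hunit w hw)
    have h' := DFunLike.congr_fun h z
    simp [hxz] at h'
    exact eq_inv_of_mul_eq_one_right h'
  have hdz : ∀ z ∈ A ∪ B, auxDbar χ =ᶠ[𝓝 z] fun _ => 0 := fun z hz =>
    auxDbar_zero_of_const (hχX z hz)
  let Φ₀ : ℂ → C((A ∪ B : Set ℂ), ℂ) := fun w =>
    auxDbar χ w • Ring.inverse (algebraMap ℂ C((A ∪ B : Set ℂ), ℂ) w - x)
  have hΦ₀ : ∀ w, Φ₀ w ∈ S := by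
    intro w
    by_cases hw : w ∈ A ∪ B
    · have := (hdz w hw).self_of_nhds
      simp [Φ₀, this]
    · exact S.smul_mem (hmem w hw) _
  have hΦ₀c : Continuous Φ₀ := by
    rw [continuous_iff_continuousAt]
    intro w
    by_cases hw : w ∈ A ∪ B
    · have : Φ₀ =ᶠ[𝓝 w] fun _ => 0 := by
        filter_upwards [hdz w hw] with w' h'
        simp [Φ₀, h']
      exact (continuousAt_congr this).2 continuousAt_const
    · refine (auxDbar_continuous hχ).continuousAt.smul ?_
      obtain ⟨u, hu'⟩ := hunit w hw
      have h1 : ContinuousAt Ring.inverse (algebraMap ℂ C((A ∪ B : Set ℂ), ℂ) w - x) := by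
        rw [← hu']
        exact NormedRing.inverse_continuousAt u
      have h2 : ContinuousAt (fun w => algebraMap ℂ C((A ∪ B : Set ℂ), ℂ) w - x) w :=
        ((continuous_algebraMap ℂ _).sub continuous_const).continuousAt
      exact ContinuousAt.comp (f := fun w => algebraMap ℂ C((A ∪ B : Set ℂ), ℂ) w - x) h1 h2
  let Φ : ℂ → S := fun w => ⟨Φ₀ w, hΦ₀ w⟩
  have hΦc : Continuous Φ := hΦ₀c.subtype_mk _
  have hΦint : Integrable Φ := by
    refine hΦc.integrable_of_hasCompactSupport ?_
    refine (auxDbar_cs hcs).mono fun w hw => ?_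
    rw [Function.mem_support] at hw ⊢
    intro h
    apply hw
    ext1
    simp [Φ, Φ₀, h]
  set c := ∫ w, auxDbar auxEta w * (w - 0)⁻¹ with hc
  have hc0 : c ≠ 0 := auxEta_const
  have heval : ∀ z : (A ∪ B : Set ℂ), (∫ w, Φ w).1 z = χ z * c := by
    intro z
    let L : S →L[ℂ] ℂ := (ContinuousMap.evalCLM ℂ z).comp S.toSubmodule.subtypeL
    have h1 := L.integral_comp_comm hΦint
    change L (∫ w, Φ w) = _
    rw [← h1, hc, ← auxDbar_kernel hχ hcs (hχX z z.2)]
    congr 1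
    ext w
    change (Φ₀ w) z = _
    by_cases hw : w ∈ A ∪ B
    · have := (hdz w hw).self_of_nhds
      simp [Φ₀, this]
    · simp [Φ₀, hinv w hw z]
  have hmem2 : c⁻¹ • (∫ w, Φ w).1 ∈ S := S.smul_mem (∫ w, Φ w).2 _
  have hmem3 : c⁻¹ • (∫ w, Φ w).1 ∈
      closure (polynomialFunctions (A ∪ B) : Set C((A ∪ B : Set ℂ), ℂ)) := hmem2
  obtain ⟨q, ⟨p, -, rfl⟩, hp⟩ := Metric.mem_closure_iff.1 hmem3 ε hε
  have hpz : ∀ z : (A ∪ B : Set ℂ), ‖p.eval (z : ℂ) - χ z‖ < ε := by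
    intro z
    have h := (ContinuousMap.dist_apply_le_dist z).trans_lt hp
    rw [dist_comm, dist_eq_norm] at h
    have e : (c⁻¹ • (∫ w, Φ w).1) z = χ z := by
      rw [ContinuousMap.smul_apply, heval, smul_eq_mul]
      field_simp
    rw [e] at h
    simpa using h
  refine ⟨p, fun z hz => ?_, fun z hz => ?_⟩
  · have := hpz ⟨z, Or.inl hz⟩
    rwa [(hχA z hz).self_of_nhds] at this
  · have := hpz ⟨z, Or.inr hz⟩
    rwa [(hχB z hz).self_of_nhds, sub_zero] at this

theorem aux_peak {N : ℕ} {D K : Set (EN N)} (hK : IsCompact K) (hc : HolConvexIn D K)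
    {z : EN N} (hz : z ∈ D) (hzK : z ∉ K) :
    ∃ ψ : EN N → ℂ, DifferentiableOn ℂ ψ D ∧ ψ z = 1 ∧ ∀ w ∈ K, ‖ψ w‖ ≤ 1 / 4 := by
  have h1 : z ∉ holHull D K := by rwa [hc.2]
  have h2 : ∃ φ : EN N → ℂ, DifferentiableOn ℂ φ D ∧ ⨆ w ∈ K, ‖φ w‖ < ‖φ z‖ := by
    by_contra hcon
    push Not at hcon
    exact h1 ⟨hz, hcon⟩
  obtain ⟨φ, hφ, hlt⟩ := h2
  obtain ⟨C, hC, hb⟩ := aux_bdd hK (hφ.continuousOn.mono hc.1)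
  set s := ⨆ w ∈ K, ‖φ w‖ with hs
  have hs0 : 0 ≤ s := Real.iSup_nonneg fun _ => Real.iSup_nonneg fun _ => norm_nonneg _
  have hle : ∀ w ∈ K, ‖φ w‖ ≤ s := fun w hw => aux_le_bs hC hb hw
  have hpos : 0 < ‖φ z‖ := hs0.trans_lt hlt
  have hr : s / ‖φ z‖ < 1 := (div_lt_one hpos).2 hlt
  obtain ⟨m, hm⟩ := exists_pow_lt_of_lt_one (by norm_num : (0 : ℝ) < 1 / 4) hr
  have hdq : DifferentiableOn ℂ (fun w => φ w / φ z) D := by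
    simp only [div_eq_mul_inv]
    exact hφ.mul_const _
  refine ⟨fun w => (φ w / φ z) ^ m, hdq.pow m, ?_, fun w hw => ?_⟩
  · simp [div_self (norm_pos_iff.1 hpos)]
  · simp only [norm_pow, norm_div]
    refine le_trans ?_ hm.le
    have := hle w hw
    gcongr

theorem aux_step {N : ℕ} {D K L : Set (EN N)} (hK : IsCompact K) (hL : IsCompact L)
    (hcK : HolConvexIn D K) (hcL : HolConvexIn D L) {f : EN N → ℂ}
    (hf : DifferentiableOn ℂ f D)
    (hd : Disjoint (polyHull1 (f '' K)) (polyHull1 (f '' L))) :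
    HolConvexIn D (K ∪ L) := by
  have hfK : IsCompact (f '' K) := hK.image_of_continuousOn (hf.continuousOn.mono hcK.1)
  have hfL : IsCompact (f '' L) := hL.image_of_continuousOn (hf.continuousOn.mono hcL.1)
  have hKL : K ∪ L ⊆ D := union_subset hcK.1 hcL.1
  have hsep : ∀ ε : ℝ, 0 < ε → ∃ p : Polynomial ℂ,
      (∀ w ∈ K, ‖p.eval (f w) - 1‖ < ε) ∧ ∀ w ∈ L, ‖p.eval (f w)‖ < ε := by
    intro ε hε
    obtain ⟨p, h1, h2⟩ := aux_separate (aux_hull_compact hfK) (aux_hull_compact hfL) hd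
      (aux_union_unbounded (aux_hull_compact hfK) (aux_hull_compact hfL) hd
        (fun w hw => aux_hull_unbounded hfK hw) (fun w hw => aux_hull_unbounded hfL hw)) hε
    exact ⟨p, fun w hw => h1 _ (aux_subset_hull hfK (mem_image_of_mem _ hw)),
      fun w hw => h2 _ (aux_subset_hull hfL (mem_image_of_mem _ hw))⟩
  refine ⟨hKL, Subset.antisymm ?_ ?_⟩
  · rintro z ⟨hzD, hz⟩
    by_contra hcon
    have hzK : z ∉ K := fun h => hcon (Or.inl h)
    have hzL : z ∉ L := fun h => hcon (Or.inr h)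
    obtain ⟨φ, hφ, hφz, hφK⟩ := aux_peak hK hcK hzD hzK
    obtain ⟨θ, hθ, hθz, hθL⟩ := aux_peak hL hcL hzD hzL
    obtain ⟨M, hM, hφL⟩ := aux_bdd hL (hφ.continuousOn.mono hcL.1)
    obtain ⟨M', hM', hθK⟩ := aux_bdd hK (hθ.continuousOn.mono hcK.1)
    set ε : ℝ := 1 / (4 * (M + M' + 1)) with hεd
    have hε : 0 < ε := by positivity
    have e1 : (M + M' + 1) * ε = 1 / 4 := by rw [hεd]; field_simp
    have e2 : M * ε ≤ 1 / 4 := by nlinarith [mul_nonneg hM' hε.le]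
    have e3 : M' * ε ≤ 1 / 4 := by nlinarith [mul_nonneg hM hε.le]
    have e4 : ε ≤ 1 / 4 := by nlinarith [mul_nonneg hM hε.le, mul_nonneg hM' hε.le]
    obtain ⟨p, hpK, hpL⟩ := hsep ε hε
    have hp : DifferentiableOn ℂ (fun w => p.eval (f w)) D :=
      p.differentiable.comp_differentiableOn hf
    have a1 := hz (fun w => φ w * p.eval (f w)) (hφ.mul hp)
    have a2 := hz (fun w => θ w * (1 - p.eval (f w))) (hθ.mul (hp.const_sub 1))
    have b1 : ⨆ w ∈ K ∪ L, ‖φ w * p.eval (f w)‖ ≤ 5 / 16 := by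
      refine aux_bs_le (by norm_num) ?_
      rintro w (hw | hw)
      · rw [norm_mul]
        have h1 := hφK w hw
        have h2 : ‖p.eval (f w)‖ ≤ 5 / 4 := by
          have := norm_add_le (p.eval (f w) - 1) 1
          rw [sub_add_cancel, norm_one] at this
          linarith [hpK w hw]
        calc _ ≤ (1 / 4 : ℝ) * (5 / 4) := by gcongr
          _ = 5 / 16 := by norm_num
      · rw [norm_mul]
        have h1 := hφL w hw
        have h2 := (hpL w hw).le
        calc _ ≤ M * ε := by gcongr
          _ ≤ 5 / 16 := by linarith
    have b2 : ⨆ w ∈ K ∪ L, ‖θ w * (1 - p.eval (f w))‖ ≤ 5 / 16 := by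
      refine aux_bs_le (by norm_num) ?_
      rintro w (hw | hw)
      · rw [norm_mul, norm_sub_rev]
        have h1 := hθK w hw
        have h2 := (hpK w hw).le
        calc _ ≤ M' * ε := by gcongr
          _ ≤ 5 / 16 := by linarith
      · rw [norm_mul]
        have h1 := hθL w hw
        have h2 : ‖1 - p.eval (f w)‖ ≤ 5 / 4 := by
          have := norm_sub_le 1 (p.eval (f w))
          rw [norm_one] at this
          linarith [hpL w hw]
        calc _ ≤ (1 / 4 : ℝ) * (5 / 4) := by gcongr
          _ = 5 / 16 := by norm_num
    have c1 := a1.trans b1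
    have c2 := a2.trans b2
    simp only [hφz, hθz, one_mul] at c1 c2
    have := norm_add_le (p.eval (f z)) (1 - p.eval (f z))
    rw [add_sub_cancel, norm_one] at this
    linarith
  · intro z hz
    refine ⟨hKL hz, fun φ hφ => ?_⟩
    obtain ⟨C, hC, hb⟩ := aux_bdd (hK.union hL) (hφ.continuousOn.mono hKL)
    exact aux_le_bs hC hb hz

/-- **Corollary on unions of `𝒪(D)`-convex sets.** If `K_0, …, K_n` are compact
`𝒪(D)`-convex subsets of a pseudoconvex domain `D` and for each `j ≥ 1` some `f ∈ 𝒪(D)`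
separates the polynomial hulls of `f(K_j)` and `f(K_0 ∪ ⋯ ∪ K_{j-1})`, then
`K_0 ∪ ⋯ ∪ K_n` is `𝒪(D)`-convex. -/
theorem union_holConvex {N n : ℕ} (D : Set (EN N)) (hD : Pseudoconvex D)
    (K : Fin (n + 1) → Set (EN N))
    (hK : ∀ j, IsCompact (K j) ∧ HolConvexIn D (K j))
    (hsep : ∀ j : Fin (n + 1), j ≠ 0 → ∃ f : EN N → ℂ, DifferentiableOn ℂ f D ∧
      Disjoint (polyHull1 (f '' K j)) (polyHull1 (f '' ⋃ i < j, K i))) :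
    HolConvexIn D (⋃ j, K j) := by
  have key : ∀ m : ℕ, ∀ hm : m < n + 1,
      IsCompact (⋃ i : Fin (n + 1), ⋃ (_ : i ≤ ⟨m, hm⟩), K i) ∧
      HolConvexIn D (⋃ i : Fin (n + 1), ⋃ (_ : i ≤ ⟨m, hm⟩), K i) := by
    intro m
    induction m with
    | zero =>
      intro hm
      have : (⋃ i : Fin (n + 1), ⋃ (_ : i ≤ ⟨0, hm⟩), K i) = K 0 := by
        ext x
        simp only [mem_iUnion, exists_prop]
        constructor
        · rintro ⟨i, hi, hx⟩
          have : i = 0 := Fin.le_zero_iff.1 hi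
          rwa [this] at hx
        · exact fun hx => ⟨0, le_rfl, hx⟩
      rw [this]
      exact hK 0
    | succ m ih =>
      intro hm
      obtain ⟨h1, h2⟩ := ih (Nat.lt_of_succ_lt hm)
      obtain ⟨f, hf, hd⟩ := hsep ⟨m + 1, hm⟩ (by simp [Fin.ext_iff])
      have e1 : (⋃ i : Fin (n + 1), ⋃ (_ : i < ⟨m + 1, hm⟩), K i)
          = ⋃ i : Fin (n + 1), ⋃ (_ : i ≤ ⟨m, Nat.lt_of_succ_lt hm⟩), K i := by
        ext x
        simp only [mem_iUnion, exists_prop, Fin.lt_def, Fin.le_def, Nat.lt_succ_iff]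
      have e2 : (⋃ i : Fin (n + 1), ⋃ (_ : i ≤ ⟨m + 1, hm⟩), K i) = K ⟨m + 1, hm⟩ ∪
          ⋃ i : Fin (n + 1), ⋃ (_ : i ≤ ⟨m, Nat.lt_of_succ_lt hm⟩), K i := by
        rw [← e1]
        ext x
        simp only [mem_iUnion, exists_prop, mem_union]
        constructor
        · rintro ⟨i, hi, hx⟩
          rcases hi.eq_or_lt with rfl | h
          · exact Or.inl hx
          · exact Or.inr ⟨i, h, hx⟩
        · rintro (hx | ⟨i, hi, hx⟩)
          · exact ⟨_, le_rfl, hx⟩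
          · exact ⟨i, hi.le, hx⟩
      rw [e1] at hd
      rw [e2]
      exact ⟨(hK _).1.union h1, aux_step (hK _).1 h1 (hK _).2 h2 hf hd⟩
  have hfin := (key n (Nat.lt_succ_self n)).2
  have e : (⋃ i : Fin (n + 1), ⋃ (_ : i ≤ ⟨n, Nat.lt_succ_self n⟩), K i) = ⋃ j, K j := by
    ext x
    simp only [mem_iUnion, exists_prop]
    exact ⟨fun ⟨i, _, h⟩ => ⟨i, h⟩, fun ⟨i, h⟩ => ⟨i, Nat.lt_succ_iff.1 i.2, h⟩⟩
  rwa [e] at hfin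
end

section
/- Let D ⊆ ℂ^N be a strictly pseudoconvex domain and let γ : bD × [0,1] → cl(D) be a C² map such that γ(x,r) ∈ D for all x ∈ bD and r ∈ [0,1), γ(x,1) = x, and the curve r ↦ γ(x,r) hits bD transversally at x as r → 1, for every x ∈ bD. For r ∈ [0,1) set bD_r := {γ(x,r) : x ∈ bD}. Then for every compact set K ⊆ D there exists r_0 ∈ (0,1) such that for every r ∈ (r_0, 1), bD_r is the boundary of a strictly pseudoconvex domain contained in D that contains K. -/
open Set Filter Topology Metric MeasureTheory
open scoped ENNReal NNReal InnerProductSpace ComplexConjugate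

/-- local `C²` retraction -/
theorem aux_retract {E : Type*} [NormedAddCommGroup E] [NormedSpace ℝ E] [FiniteDimensional ℝ E]
    (D : Set E) (ρ : E → ℝ) (V : Set E) (hV : IsOpen V)
    (hρ : ContDiffOn ℝ 2 ρ V) (hDV : D = {z ∈ V | ρ z < 0})
    (hz : ∀ x ∈ frontier D, x ∈ V ∧ ρ x = 0)
    (x₀ : E) (hx₀ : x₀ ∈ frontier D) (hd : fderiv ℝ ρ x₀ ≠ 0) :
    ∃ U : Set E, IsOpen U ∧ x₀ ∈ U ∧ ∃ π : E → E, ContDiffOn ℝ 2 π U ∧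
      MapsTo π U (frontier D) ∧ ∀ x ∈ U ∩ frontier D, π x = x := by
  have : CompleteSpace E := FiniteDimensional.complete ℝ E
  have hxV := (hz x₀ hx₀).1
  have hρat : ∀ z ∈ V, ContDiffAt ℝ 2 ρ z := fun z hz => hρ.contDiffAt (hV.mem_nhds hz)
  set l := fderiv ℝ ρ x₀ with hl
  obtain ⟨v, hv⟩ : ∃ v, l v = 1 := by
    obtain ⟨u, hu⟩ : ∃ u, l u ≠ 0 := by
      by_contra h
      push Not at h
      exact hd (ContinuousLinearMap.ext h)
    exact ⟨(l u)⁻¹ • u, by simp [hu]⟩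
  set Ψ : E → E := fun z => z + (ρ z - l z) • v with hΨ
  have hΨc : ContDiffAt ℝ 2 Ψ x₀ :=
    contDiffAt_id.add (((hρat _ hxV).sub l.contDiff.contDiffAt).smul contDiffAt_const)
  have hΨd : HasFDerivAt Ψ ((ContinuousLinearEquiv.refl ℝ E : E ≃L[ℝ] E) : E →L[ℝ] E) x₀ := by
    have h1 : HasFDerivAt ρ l x₀ := ((hρat _ hxV).differentiableAt (by norm_num)).hasFDerivAt
    have h2 := (hasFDerivAt_id (𝕜 := ℝ) x₀).add ((h1.sub l.hasFDerivAt).smul_const v)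
    have h3 : ((ContinuousLinearEquiv.refl ℝ E : E ≃L[ℝ] E) : E →L[ℝ] E) =
        ContinuousLinearMap.id ℝ E + (l - l).smulRight v := by
      ext w
      simp
    rw [h3]
    exact h2
  have hlΨ : ∀ z, l (Ψ z) = ρ z := by intro z; simp [hΨ, hv]
  set e := hΨc.toOpenPartialHomeomorph Ψ hΨd (by norm_num) with he
  have hsrc : x₀ ∈ e.source := hΨc.mem_toOpenPartialHomeomorph_source hΨd (by norm_num)
  have hcoe : ∀ z, e z = Ψ z := fun z => rfl
  have hloc : ContDiffAt ℝ 2 e.symm (Ψ x₀) := hΨc.to_localInverse hΨd (by norm_num)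
  set q : E → E := fun z => Ψ z - ρ z • v with hq
  set π : E → E := fun z => e.symm (q z) with hπ
  have hρ0 : ρ x₀ = 0 := (hz x₀ hx₀).2
  have hqx : q x₀ = Ψ x₀ := by simp [hq, hρ0]
  have hqc : ContDiffAt ℝ 2 q x₀ := hΨc.sub ((hρat _ hxV).smul contDiffAt_const)
  have hπc : ContDiffAt ℝ 2 π x₀ := by
    apply ContDiffAt.comp x₀ _ hqc
    rw [hqx]; exact hloc
  have hπx : π x₀ = x₀ := by
    simp only [hπ]; rw [hqx, ← hcoe]; exact e.left_inv hsrc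
  -- open set where things are good
  have hgood : ∀ᶠ z in 𝓝 x₀, z ∈ V ∧ 0 < fderiv ℝ ρ z v := by
    refine Filter.Eventually.and (hV.mem_nhds hxV) ?_
    have : ContinuousAt (fun z => fderiv ℝ ρ z v) x₀ := by
      have h := ((hρat _ hxV).fderiv_right (m := 1) (by norm_num)).continuousAt
      exact h.clm_apply continuousAt_const
    apply this.eventually (lt_mem_nhds _)
    change 0 < l v
    rw [hv]; norm_num
  have hfr : ∀ z ∈ V, 0 < fderiv ℝ ρ z v → ρ z = 0 → z ∈ frontier D := by
    intro z hzV hzd hz0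
    have hopen : IsOpen D := by
      rw [hDV]
      exact hρ.continuousOn.isOpen_inter_preimage hV isOpen_Iio
    rw [hopen.frontier_eq]
    refine ⟨?_, ?_⟩
    · have hcurve : HasDerivAt (fun t : ℝ => ρ (z + t • v)) (fderiv ℝ ρ z v) 0 := by
        have h1 : HasFDerivAt ρ (fderiv ℝ ρ z) (z + (0:ℝ) • v) := by
          simpa using ((hρat _ hzV).differentiableAt (by norm_num)).hasFDerivAt
        have h2 : HasDerivAt (fun t : ℝ => z + t • v) v 0 := by
          simpa using ((hasDerivAt_id (0:ℝ)).smul_const v).const_add z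
        exact h1.comp_hasDerivAt (0:ℝ) h2
      have hneg : ∀ᶠ t in 𝓝[<] (0:ℝ), ρ (z + t • v) < 0 := by
        have h3 := (hasDerivAt_iff_tendsto_slope_left_right.1 hcurve).1
        have h4 := h3.eventually (lt_mem_nhds hzd)
        filter_upwards [h4, self_mem_nhdsWithin] with t ht ht0
        simp only [slope_def_field, zero_smul, add_zero, hz0, sub_zero] at ht
        by_contra hcon
        push Not at hcon
        have := div_nonpos_of_nonneg_of_nonpos hcon (le_of_lt ht0)
        linarith
      have hct : Tendsto (fun t : ℝ => z + t • v) (𝓝[<] 0) (𝓝 z) := by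
        have : Continuous (fun t : ℝ => z + t • v) := by fun_prop
        have h := this.tendsto 0
        simp only [zero_smul, add_zero] at h
        exact h.mono_left nhdsWithin_le_nhds
      refine mem_closure_of_tendsto hct ?_
      filter_upwards [hneg, hct.eventually (hV.mem_nhds hzV)] with t ht htV
      rw [hDV]; exact ⟨htV, ht⟩
    · rw [hDV]; rintro ⟨_, h⟩; linarith
  have hqt : ∀ᶠ z in 𝓝 x₀, q z ∈ e.target := by
    apply hqc.continuousAt.eventually
    rw [hqx]; exact e.open_target.mem_nhds (e.map_source hsrc)
  have hev : ∀ᶠ z in 𝓝 x₀, ContDiffAt ℝ 2 π z ∧ z ∈ e.source ∧ q z ∈ e.target ∧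
      (π z ∈ V ∧ 0 < fderiv ℝ ρ (π z) v) := by
    refine (hπc.eventually (by norm_num)).and (Filter.Eventually.and (e.open_source.mem_nhds hsrc) (hqt.and ?_))
    have hgood' : ∀ᶠ z in 𝓝 (π x₀), z ∈ V ∧ 0 < fderiv ℝ ρ z v := by
      rw [hπx]; exact hgood
    exact hπc.continuousAt.eventually hgood'
  obtain ⟨U, hUs, hUo, hxU⟩ := _root_.eventually_nhds_iff.1 hev
  refine ⟨U, hUo, hxU, π, fun z hz => (hUs z hz).1.contDiffWithinAt, ?_, ?_⟩
  · intro z hz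
    obtain ⟨-, -, h3, h4, h5⟩ := hUs z hz
    refine hfr _ h4 h5 ?_
    have h6 : Ψ (π z) = q z := e.right_inv h3
    rw [← hlΨ, h6]
    simp [hq, hlΨ, hv]
  · rintro x ⟨hxU, hxf⟩
    obtain ⟨-, h2, -⟩ := hUs x hxU
    have : q x = e x := by simp [hq, (hz x hxf).2, hcoe]
    simp only [hπ]
    rw [this]; exact e.left_inv h2

/-- global `C²` extension of the displacement -/
theorem aux_extend {E : Type*} [NormedAddCommGroup E] [NormedSpace ℝ E] [FiniteDimensional ℝ E]
    (B : Set E) (hB : IsCompact B)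
    (hret : ∀ x₀ ∈ B, ∃ U : Set E, IsOpen U ∧ x₀ ∈ U ∧ ∃ π : E → E, ContDiffOn ℝ 2 π U ∧
      MapsTo π U B ∧ ∀ x ∈ U ∩ B, π x = x)
    (γ : E × ℝ → E) (hγ : ContDiffOn ℝ 2 γ (B ×ˢ Icc (0:ℝ) 1)) (hγ1 : ∀ x ∈ B, γ (x, 1) = x) :
    ∃ (R : ℝ) (H : E × ℝ → E), ContDiff ℝ 2 H ∧ (∀ z, H (z, 0) = 0) ∧
      (∀ x ∈ B, ∀ s, H (x, s) = γ (x, (1 + s ^ 2)⁻¹) - x) ∧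
      ∀ p : E × ℝ, R ≤ ‖p.1‖ → H p = 0 := by
  obtain ⟨R, hR⟩ := hB.isBounded.subset_ball (0 : E)
  set h : E × ℝ → E := fun p => γ (p.1, (1 + p.2 ^ 2)⁻¹) - p.1 with hh
  have hm : ∀ s : ℝ, (1 + s ^ 2)⁻¹ ∈ Icc (0:ℝ) 1 := fun s =>
    ⟨by positivity, inv_le_one_of_one_le₀ (by nlinarith [sq_nonneg s])⟩
  let t : E × ℝ → Set E := fun p =>
    {v | (p.1 ∈ B → v = h p) ∧ (p.2 = 0 → v = 0) ∧ (R ≤ ‖p.1‖ → v = 0)}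
  have ht : ∀ p, Convex ℝ (t p) := by
    intro p v hv w hw a b ha hb hab
    have key : ∀ c : E, v = c → w = c → a • v + b • w = c := by
      rintro c rfl rfl
      rw [← add_smul, hab, one_smul]
    exact ⟨fun hp => key _ (hv.1 hp) (hw.1 hp), fun hp => key _ (hv.2.1 hp) (hw.2.1 hp),
      fun hp => key _ (hv.2.2 hp) (hw.2.2 hp)⟩
  obtain ⟨g, hg⟩ := exists_contMDiffMap_forall_mem_convex_of_local (n := 2)
    (modelWithCornersSelf ℝ (E × ℝ)) ht (by
    rintro ⟨z, s⟩
    by_cases hz : z ∈ B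
    · obtain ⟨U, hUo, hzU, π, hπ, hmaps, hid⟩ := hret z hz
      refine ⟨(U ∩ ball 0 R) ×ˢ univ, ((hUo.inter isOpen_ball).prod isOpen_univ).mem_nhds
        ⟨⟨hzU, hR hz⟩, mem_univ _⟩, fun p => h (π p.1, p.2), ?_, ?_⟩
      · rw [contMDiffOn_iff_contDiffOn]
        have hπ' : ContDiffOn ℝ 2 (fun p : E × ℝ => π p.1) ((U ∩ ball 0 R) ×ˢ univ) :=
          hπ.comp contDiff_fst.contDiffOn (fun p hp => hp.1.1)
        have hr : ContDiff ℝ 2 (fun p : E × ℝ => (1 + p.2 ^ 2)⁻¹) := by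
          apply ContDiff.inv
          · fun_prop
          · intro p; positivity
        refine ContDiffOn.sub ?_ hπ'
        exact hγ.comp (hπ'.prodMk hr.contDiffOn) (fun p hp => ⟨hmaps hp.1.1, hm _⟩)
      · rintro ⟨y, u⟩ ⟨⟨hyU, hyR⟩, -⟩
        refine ⟨fun hy => ?_, fun hu => ?_, fun hy => ?_⟩
        · simp only at hy ⊢
          rw [hid y ⟨hyU, hy⟩]
        · simp only at hu
          subst hu
          simp [hh, hγ1 _ (hmaps hyU)]
        · simp only [mem_ball_zero_iff] at hyR hy
          linarith
    · refine ⟨Bᶜ ×ˢ univ, (hB.isClosed.isOpen_compl.prod isOpen_univ).mem_nhds ⟨hz, mem_univ _⟩,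
        fun _ => 0, contMDiffOn_const, ?_⟩
      rintro ⟨y, u⟩ ⟨hy, -⟩
      exact ⟨fun h => absurd h hy, fun _ => rfl, fun _ => rfl⟩)
  refine ⟨R, g, contMDiff_iff_contDiff.1 g.contMDiff, fun z => (hg (z, 0)).2.1 rfl,
    fun x hx s => (hg (x, s)).1 hx, fun p hp => (hg p).2.2 hp⟩

/-- derivative vanishing and Lipschitz bound -/
theorem aux_lip {E : Type*} [NormedAddCommGroup E] [NormedSpace ℝ E] [FiniteDimensional ℝ E]
    (R : ℝ) (H : E × ℝ → E) (hH : ContDiff ℝ 2 H) (h0 : ∀ z, H (z, 0) = 0)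
    (hR : ∀ p : E × ℝ, R ≤ ‖p.1‖ → H p = 0) :
    ∃ δ > 0, LipschitzWith (1/2) (fun p : E × ℝ => H (p.1, (δ * Real.sin p.2) ^ 2)) := by
  set H2 : E × ℝ → E := fun p => H (p.1, p.2 ^ 2) with hH2
  have hc : ContDiff ℝ 2 H2 := hH.comp (by fun_prop)
  have hd0 : ∀ z, fderiv ℝ H2 (z, 0) = 0 := by
    intro z
    have e1 : HasFDerivAt H (fderiv ℝ H (z, 0)) (z, (0:ℝ)^2) := by
      have := ((hH.differentiable (by norm_num)) (z, 0)).hasFDerivAt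
      simpa using this
    have e2 : HasFDerivAt (fun p : E × ℝ => (p.1, p.2 ^ 2))
        ((ContinuousLinearMap.fst ℝ E ℝ).prod (0 : E × ℝ →L[ℝ] ℝ)) (z, (0:ℝ)) := by
      refine hasFDerivAt_fst.prodMk ?_
      have := (hasFDerivAt_snd (𝕜 := ℝ) (p := (z, (0:ℝ)))).pow 2
      simpa using this
    have e3 : HasFDerivAt H2 _ (z, 0) := e1.comp (z, (0:ℝ)) e2
    have e4 : HasFDerivAt (fun y : E => H (y, 0))
        ((fderiv ℝ H (z, 0)).comp (ContinuousLinearMap.inl ℝ E ℝ)) z := by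
      have f1 : HasFDerivAt H (fderiv ℝ H (z, 0)) (z, (0:ℝ)) :=
        ((hH.differentiable (by norm_num)) (z, 0)).hasFDerivAt
      exact f1.comp z (hasFDerivAt_prodMk_left z (0:ℝ))
    have e5 : (fderiv ℝ H (z, 0)).comp (ContinuousLinearMap.inl ℝ E ℝ) = 0 := by
      have : (fun y : E => H (y, 0)) = fun _ => 0 := funext h0
      rw [this] at e4
      exact e4.unique (hasFDerivAt_const _ _)
    rw [e3.fderiv]
    refine ContinuousLinearMap.ext fun q => ?_
    simpa using DFunLike.congr_fun e5 q.1
  have hcont : Continuous (fun p => ‖fderiv ℝ H2 p‖) :=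
    (hc.continuous_fderiv (by norm_num)).norm
  have hev : ∀ᶠ s in 𝓝 (0:ℝ), ∀ z ∈ closedBall (0:E) R, ‖fderiv ℝ H2 (z, s)‖ ≤ 1/2 := by
    have : ProperSpace E := FiniteDimensional.proper ℝ E
    apply (isCompact_closedBall (0:E) R).eventually_forall_of_forall_eventually
    intro z _
    have hc' : Continuous (fun p : ℝ × E => ‖fderiv ℝ H2 (p.2, p.1)‖) :=
      hcont.comp (by fun_prop)
    have := hc'.tendsto (0, z)
    simp only [hd0, norm_zero] at this
    exact this.eventually (ge_mem_nhds (by norm_num))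
  obtain ⟨δ, hδ, hball⟩ := Metric.eventually_nhds_iff.1 hev
  have hall : ∀ p ∈ (univ : Set E) ×ˢ Icc (-min (δ/2) 1) (min (δ/2) 1),
      ‖fderiv ℝ H2 p‖ ≤ 1/2 := by
    rintro ⟨z, s⟩ ⟨-, hs⟩
    by_cases hz : z ∈ closedBall (0:E) R
    · refine hball ?_ z hz
      have := abs_le.2 hs
      simp only at this
      rw [Real.dist_eq, sub_zero]
      have := min_le_left (δ/2) 1
      linarith
    · have : H2 =ᶠ[𝓝 (z, s)] fun _ => 0 := by
        have ho : IsOpen {p : E × ℝ | R < ‖p.1‖} :=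
          isOpen_lt continuous_const continuous_fst.norm
        filter_upwards [ho.mem_nhds (show (z, s) ∈ {p : E × ℝ | R < ‖p.1‖} by
          simpa using hz)] with p hp
        exact hR _ (le_of_lt hp)
      rw [this.fderiv_eq]
      simp
  have hδ' : 0 < min (δ/2) 1 := lt_min (by linarith) one_pos
  refine ⟨min (δ/2) 1, hδ', ?_⟩
  set d := min (δ/2) 1 with hd
  have hd1 : d ≤ 1 := min_le_right _ _
  apply LipschitzWith.of_dist_le_mul
  intro p q
  have hmem : ∀ p : E × ℝ, (p.1, d * Real.sin p.2) ∈ (univ : Set E) ×ˢ Icc (-d) d := by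
    intro p
    refine ⟨mem_univ _, ?_⟩
    constructor <;> nlinarith [Real.neg_one_le_sin p.2, Real.sin_le_one p.2]
  have hconv : Convex ℝ ((univ : Set E) ×ˢ Icc (-d) d) := convex_univ.prod (convex_Icc _ _)
  have := hconv.norm_image_sub_le_of_norm_fderiv_le (𝕜 := ℝ) (f := H2)
    (fun x _ => hc.differentiable (by norm_num) x) hall (hmem q) (hmem p)
  rw [dist_eq_norm]
  refine this.trans ?_
  push_cast
  refine mul_le_mul_of_nonneg_left ?_ (by norm_num)
  rw [dist_eq_norm]
  simp only [Prod.norm_def, Prod.fst_sub, Prod.snd_sub]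
  refine max_le_max le_rfl ?_
  rw [← mul_sub, norm_mul, Real.norm_eq_abs, Real.norm_eq_abs, Real.norm_eq_abs, abs_of_pos hδ']
  calc d * |Real.sin p.2 - Real.sin q.2| ≤ 1 * |p.2 - q.2| :=
        mul_le_mul hd1 (Real.abs_sin_sub_sin_le _ _) (abs_nonneg _) (by norm_num)
    _ = _ := one_mul _

/-- `C²` homeomorphism from a small displacement -/
theorem aux_homeo {F : Type*} [NormedAddCommGroup F] [NormedSpace ℝ F] [FiniteDimensional ℝ F]
    [Nontrivial F] (J : F → F) (hJ : ContDiff ℝ 2 J) (hL : LipschitzWith (1/2) J) :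
    ∃ Φ : F ≃ₜ F, (∀ p, Φ p = p + J p) ∧ ContDiff ℝ 2 Φ.symm := by
  have : CompleteSpace F := FiniteDimensional.complete ℝ F
  have happ : ApproximatesLinearOn (fun p => p + J p)
      ((ContinuousLinearEquiv.refl ℝ F : F ≃L[ℝ] F) : F →L[ℝ] F) univ (1/2) := by
    intro p _ q _
    have := hL.dist_le_mul p q
    rw [dist_eq_norm, dist_eq_norm] at this
    refine le_trans (le_of_eq ?_) this
    congr 1
    change p + J p - (q + J q) - (p - q) = J p - J q
    abel
  have hn : ‖((ContinuousLinearEquiv.refl ℝ F).symm : F →L[ℝ] F)‖₊ = 1 := by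
    have : ((ContinuousLinearEquiv.refl ℝ F).symm : F →L[ℝ] F) = ContinuousLinearMap.id ℝ F := rfl
    rw [this]
    ext
    simp
  let Φ := happ.toHomeomorph (fun p => p + J p) (Or.inr (by
    rw [hn]; simpa using NNReal.half_lt_self one_ne_zero))
  have hΦ : ∀ p, Φ p = p + J p := fun p => rfl
  refine ⟨Φ, hΦ, ?_⟩
  have hlt : ∀ a, ‖-fderiv ℝ J a‖ < 1 := by
    intro a
    rw [norm_neg]
    have := norm_fderiv_le_of_lipschitz ℝ hL (x₀ := a)
    refine this.trans_lt ?_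
    norm_num
  let f' : F → F ≃L[ℝ] F := fun a =>
    ContinuousLinearEquiv.unitsEquiv ℝ F (Units.oneSub (-fderiv ℝ J a) (hlt a))
  have hf' : ∀ a, HasFDerivAt Φ (f' a : F →L[ℝ] F) a := by
    intro a
    have h1 := (hasFDerivAt_id (𝕜 := ℝ) a).add ((hJ.differentiable (by norm_num)) a).hasFDerivAt
    have h2 : (f' a : F →L[ℝ] F) = ContinuousLinearMap.id ℝ F + fderiv ℝ J a := by
      ext w
      simp [f']
    rw [h2]
    exact h1
  exact Φ.contDiff_symm hf' (contDiff_id.add hJ)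

/-- the family of diffeomorphisms -/
theorem aux_flow {E : Type*} [NormedAddCommGroup E] [NormedSpace ℝ E] [FiniteDimensional ℝ E]
    (B : Set E) (hB : IsCompact B)
    (hret : ∀ x₀ ∈ B, ∃ U : Set E, IsOpen U ∧ x₀ ∈ U ∧ ∃ π : E → E, ContDiffOn ℝ 2 π U ∧
      MapsTo π U B ∧ ∀ x ∈ U ∩ B, π x = x)
    (γ : E × ℝ → E) (hγ : ContDiffOn ℝ 2 γ (B ×ˢ Icc (0:ℝ) 1)) (hγ1 : ∀ x ∈ B, γ (x, 1) = x) :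
    ∃ Φ : (E × ℝ) ≃ₜ (E × ℝ), ContDiff ℝ 2 Φ.symm ∧ (∀ p, (Φ p).2 = p.2) ∧
      (∀ z, Φ (z, 0) = (z, 0)) ∧ ∃ σ : ℝ → ℝ, Tendsto σ (𝓝[<] 1) (𝓝 0) ∧
        ∀ᶠ r in 𝓝[<] (1:ℝ), ∀ x ∈ B, Φ (x, σ r) = (γ (x, r), σ r) := by
  obtain ⟨R, H, hH, h0, hHγ, hR⟩ := aux_extend B hB hret γ hγ hγ1
  obtain ⟨δ, hδ, hL⟩ := aux_lip R H hH h0 hR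
  set J : E × ℝ → E × ℝ := fun p => (H (p.1, (δ * Real.sin p.2) ^ 2), 0) with hJ
  have hJc : ContDiff ℝ 2 J := by
    refine ContDiff.prodMk ?_ contDiff_const
    refine hH.comp (contDiff_fst.prodMk ?_)
    exact (contDiff_const.mul (Real.contDiff_sin.comp contDiff_snd)).pow 2
  have hJL : LipschitzWith (1/2) J := by
    apply LipschitzWith.of_dist_le_mul
    intro p q
    have := hL.dist_le_mul p q
    simpa [hJ, Prod.dist_eq] using this
  obtain ⟨Φ, hΦ, hΦs⟩ := aux_homeo J hJc hJL
  refine ⟨Φ, hΦs, fun p => by simp [hΦ, hJ], fun z => by simp [hΦ, hJ, h0],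
    fun r => Real.arcsin (√(√(r⁻¹ - 1)) / δ), ?_, ?_⟩
  · have hc : ContinuousAt (fun r : ℝ => Real.arcsin (√(√(r⁻¹ - 1)) / δ)) 1 := by
      have h1 : ContinuousAt (fun r : ℝ => r⁻¹ - 1) 1 :=
        (continuousAt_inv₀ one_ne_zero).sub continuousAt_const
      exact Real.continuous_arcsin.continuousAt.comp ((h1.sqrt.sqrt).div_const δ)
    have h2 := hc.tendsto
    simp only [inv_one, sub_self, Real.sqrt_zero, zero_div, Real.arcsin_zero] at h2
    exact h2.mono_left nhdsWithin_le_nhds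
  · have hc : ContinuousAt (fun r : ℝ => √(√(r⁻¹ - 1)) / δ) 1 := by
      have h1 : ContinuousAt (fun r : ℝ => r⁻¹ - 1) 1 :=
        (continuousAt_inv₀ one_ne_zero).sub continuousAt_const
      exact (h1.sqrt.sqrt).div_const δ
    have h2 := hc.tendsto
    simp only [inv_one, sub_self, Real.sqrt_zero, zero_div] at h2
    have h3 := (h2.mono_left (nhdsWithin_le_nhds (s := Iio (1:ℝ)))).eventually
      (ge_mem_nhds (show (0:ℝ) < 1 by norm_num))
    have h4 : ∀ᶠ r in 𝓝[<] (1:ℝ), 0 < r :=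
      nhdsWithin_le_nhds (lt_mem_nhds one_pos)
    filter_upwards [h3, h4, self_mem_nhdsWithin] with r hr1 hr0 hrlt x hx
    have hnn : 0 ≤ √(√(r⁻¹ - 1)) / δ := by positivity
    have hs : Real.sin (Real.arcsin (√(√(r⁻¹ - 1)) / δ)) = √(√(r⁻¹ - 1)) / δ :=
      Real.sin_arcsin (by linarith) hr1
    have hr : 0 ≤ r⁻¹ - 1 := by
      have := (one_le_inv₀ hr0).2 (le_of_lt hrlt)
      linarith
    have hval : (1 + ((δ * (√(√(r⁻¹ - 1)) / δ)) ^ 2) ^ 2)⁻¹ = r := by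
      rw [mul_div_cancel₀ _ hδ.ne', Real.sq_sqrt (Real.sqrt_nonneg _), Real.sq_sqrt hr]
      simp
    rw [hΦ]
    simp only [hJ, hs, hHγ x hx, hval]
    simp

/-- exterior segments -/
theorem aux_segment {E : Type*} [NormedAddCommGroup E] [NormedSpace ℝ E]
    (D : Set E) (ρ : E → ℝ) (V : Set E) (hV : IsOpen V)
    (hρ : ContDiffOn ℝ 2 ρ V) (hDV : D = {z ∈ V | ρ z < 0})
    (hcl : ∀ x ∈ closure D, ρ x ≤ 0)
    (hz : ∀ x ∈ frontier D, x ∈ V ∧ ρ x = 0)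
    (x₀ : E) (hx₀ : x₀ ∈ frontier D) (hd : fderiv ℝ ρ x₀ ≠ 0) :
    ∃ v : E, x₀ + v ∉ closure D ∧
      ∀ᶠ y in 𝓝 x₀, y ∈ frontier D → ∀ t ∈ Icc (0:ℝ) 1, y + t • v ∉ D := by
  have hxV := (hz x₀ hx₀).1
  have hρat : ∀ z ∈ V, ContDiffAt ℝ 2 ρ z := fun z hz => hρ.contDiffAt (hV.mem_nhds hz)
  obtain ⟨u, hu⟩ : ∃ u, 0 < fderiv ℝ ρ x₀ u := by
    obtain ⟨u, hu⟩ : ∃ u, fderiv ℝ ρ x₀ u ≠ 0 := by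
      by_contra h
      push Not at h
      exact hd (ContinuousLinearMap.ext h)
    rcases lt_or_gt_of_ne hu with h | h
    · exact ⟨-u, by simpa using h⟩
    · exact ⟨u, h⟩
  have hgood : ∀ᶠ z in 𝓝 x₀, z ∈ V ∧ 0 < fderiv ℝ ρ z u := by
    refine Filter.Eventually.and (hV.mem_nhds hxV) ?_
    have : ContinuousAt (fun z => fderiv ℝ ρ z u) x₀ := by
      have h := ((hρat _ hxV).fderiv_right (m := 1) (by norm_num)).continuousAt
      exact h.clm_apply continuousAt_const
    exact this.eventually (lt_mem_nhds hu)
  obtain ⟨η, hη, hball⟩ := Metric.eventually_nhds_iff.1 hgood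
  set c : ℝ := η / (2 * (‖u‖ + 1)) with hc
  have hcpos : 0 < c := by positivity
  have hcu : c * ‖u‖ < η / 2 := by
    have h1 : c * (‖u‖ + 1) = η / 2 := by
      rw [hc]; field_simp
    nlinarith
  have hin : ∀ y ∈ ball x₀ (η/2), ∀ t ∈ Icc (0:ℝ) 1, dist (y + t • c • u) x₀ < η := by
    intro y hy t ht
    have h1 : dist (y + t • c • u) y ≤ c * ‖u‖ := by
      rw [dist_eq_norm, add_sub_cancel_left, norm_smul, norm_smul, Real.norm_eq_abs,
        Real.norm_eq_abs, abs_of_nonneg ht.1, abs_of_pos hcpos]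
      have : 0 ≤ c * ‖u‖ := by positivity
      nlinarith [ht.2]
    have h2 := dist_triangle (y + t • c • u) y x₀
    have h3 : dist y x₀ < η/2 := hy
    linarith
  have hpos : ∀ y ∈ ball x₀ (η/2), ρ y = 0 → ∀ t ∈ Ioc (0:ℝ) 1, 0 < ρ (y + t • c • u) := by
    intro y hy hy0 t ht
    have hder : ∀ s ∈ Icc (0:ℝ) 1, HasDerivAt (fun s : ℝ => ρ (y + s • c • u))
        (fderiv ℝ ρ (y + s • c • u) (c • u)) s := by
      intro s hs
      have h1 := ((hρat _ (hball (hin y hy s hs)).1).differentiableAt (by norm_num)).hasFDerivAt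
      have h2 : HasDerivAt (fun s : ℝ => y + s • c • u) (c • u) s := by
        simpa using ((hasDerivAt_id s).smul_const (c • u)).const_add y
      exact h1.comp_hasDerivAt s h2
    obtain ⟨ξ, hξ, hs⟩ := exists_hasDerivAt_eq_slope (fun s : ℝ => ρ (y + s • c • u))
      (fun s => fderiv ℝ ρ (y + s • c • u) (c • u)) ht.1
      (fun s hs => (hder s ⟨hs.1, hs.2.trans ht.2⟩).continuousAt.continuousWithinAt)
      (fun s hs => hder s ⟨hs.1.le, hs.2.le.trans ht.2⟩)
    have hp := (hball (hin y hy ξ ⟨hξ.1.le, hξ.2.le.trans ht.2⟩)).2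
    simp only [zero_smul, add_zero, hy0, sub_zero, map_smul, smul_eq_mul] at hs
    rw [eq_div_iff ht.1.ne'] at hs
    rw [← hs]
    exact mul_pos (mul_pos hcpos hp) ht.1
  refine ⟨c • u, fun hcon => ?_, ?_⟩
  · have h1 := hpos x₀ (mem_ball_self (by linarith)) (hz _ hx₀).2 1 (by simp)
    rw [one_smul] at h1
    exact absurd (hcl _ hcon) (not_le.2 h1)
  · filter_upwards [ball_mem_nhds x₀ (show 0 < η/2 by linarith)] with y hy hyf t ht hmem
    rw [hDV] at hmem
    have h0 := (hz y hyf).2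
    rcases eq_or_lt_of_le ht.1 with h | h
    · subst h
      have := hmem.2
      simp [h0] at this
    · exact absurd hmem.2 (not_lt.2 (hpos y hy h0 t ⟨h, ht.2⟩).le)

/-- stability of the Levi condition -/
theorem aux_levi {N : ℕ} (R : EN N × ℝ → ℝ) (y₀ : EN N) (hR : ContDiffAt ℝ 2 R (y₀, 0))
    (hd : fderiv ℝ (fun y => R (y, 0)) y₀ ≠ 0)
    (hlevi : ∀ w : EN N, w ≠ 0 → ComplexTangent (fun y => R (y, 0)) y₀ w →
      0 < LeviForm (fun y => R (y, 0)) y₀ w) :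
    ∀ᶠ p in 𝓝 (y₀, (0:ℝ)), fderiv ℝ (fun y => R (y, p.2)) p.1 ≠ 0 ∧
      ∀ w : EN N, w ≠ 0 → ComplexTangent (fun y => R (y, p.2)) p.1 w →
        0 < LeviForm (fun y => R (y, p.2)) p.1 w := by
  set A : EN N × ℝ → (EN N →L[ℝ] ℝ) := fun p => fderiv ℝ (fun y => R (y, p.2)) p.1 with hA
  set B : EN N × ℝ → (EN N →L[ℝ] EN N →L[ℝ] ℝ) :=
    fun p => fderiv ℝ (fderiv ℝ (fun y => R (y, p.2))) p.1 with hB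
  have hA1 : ContDiffAt ℝ 1 A (y₀, 0) := by
    refine ContDiffAt.fderiv (n := 2) (f := fun (p : EN N × ℝ) y => R (y, p.2))
      (g := fun p => p.1) ?_ contDiffAt_fst (by norm_num)
    have : ContDiffAt ℝ 2 (fun q : (EN N × ℝ) × EN N => (q.2, q.1.2)) ((y₀, (0:ℝ)), y₀) := by
      fun_prop
    exact ContDiffAt.comp ((y₀, (0:ℝ)), y₀) hR this
  have hB1 : ContDiffAt ℝ 0 B (y₀, 0) := by
    refine ContDiffAt.fderiv (n := 1) (f := fun (p : EN N × ℝ) y => A (y, p.2))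
      (g := fun p => p.1) ?_ contDiffAt_fst (by norm_num)
    have : ContDiffAt ℝ 1 (fun q : (EN N × ℝ) × EN N => (q.2, q.1.2)) ((y₀, (0:ℝ)), y₀) := by
      fun_prop
    exact ContDiffAt.comp ((y₀, (0:ℝ)), y₀) hA1 this
  have hAc : ContinuousAt A (y₀, 0) := hA1.continuousAt
  have hBc : ContinuousAt B (y₀, 0) := hB1.continuousAt
  have hsph : ∀ᶠ p in 𝓝 (y₀, (0:ℝ)), ∀ w ∈ sphere (0 : EN N) 1,
      (A p w ≠ 0 ∨ A p (Complex.I • w) ≠ 0) ∨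
        0 < (B p w w + B p (Complex.I • w) (Complex.I • w)) / 4 := by
    apply (isCompact_sphere (0 : EN N) 1).eventually_forall_of_forall_eventually
    intro w₀ hw₀
    have hA' : ContinuousAt (fun z : (EN N × ℝ) × EN N => A z.1) ((y₀, 0), w₀) :=
      ContinuousAt.comp (g := A) hAc continuousAt_fst
    have hB' : ContinuousAt (fun z : (EN N × ℝ) × EN N => B z.1) ((y₀, 0), w₀) :=
      ContinuousAt.comp (g := B) hBc continuousAt_fst
    have hw : ContinuousAt (fun z : (EN N × ℝ) × EN N => z.2) ((y₀, 0), w₀) := continuousAt_snd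
    have hIw : ContinuousAt (fun z : (EN N × ℝ) × EN N => Complex.I • z.2) ((y₀, 0), w₀) :=
      hw.const_smul Complex.I
    by_cases h1 : A (y₀, 0) w₀ ≠ 0
    · filter_upwards [(hA'.clm_apply hw).eventually_ne h1] with z hz
      exact Or.inl (Or.inl hz)
    by_cases h2 : A (y₀, 0) (Complex.I • w₀) ≠ 0
    · filter_upwards [(hA'.clm_apply hIw).eventually_ne h2] with z hz
      exact Or.inl (Or.inr hz)
    push Not at h1 h2
    have hne : w₀ ≠ 0 := by
      rintro rfl
      simp at hw₀
    have h3 := hlevi w₀ hne ⟨h1, h2⟩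
    have hcont := (((hB'.clm_apply hw).clm_apply hw).add
      ((hB'.clm_apply hIw).clm_apply hIw)).div_const 4
    filter_upwards [hcont.eventually (lt_mem_nhds h3)] with z hz
    exact Or.inr hz
  filter_upwards [hsph, hAc.eventually_ne hd] with p hp hne
  refine ⟨hne, fun w hw hct => ?_⟩
  have hn : 0 < ‖w‖ := norm_pos_iff.2 hw
  have hIs : Complex.I • (‖w‖⁻¹ • w) = ‖w‖⁻¹ • (Complex.I • w) := smul_comm _ _ _
  have hu : ‖w‖⁻¹ • w ∈ sphere (0 : EN N) 1 := by
    rw [mem_sphere_zero_iff_norm, norm_smul, norm_inv, norm_norm, inv_mul_cancel₀ hn.ne']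
  have hA0 : A p w = 0 := hct.1
  have hA1 : A p (Complex.I • w) = 0 := hct.2
  rcases hp _ hu with (h | h) | h
  · exact absurd (by rw [map_smul, hA0, smul_zero]) h
  · exact absurd (by rw [hIs, map_smul, hA1, smul_zero]) h
  · rw [hIs] at h
    simp only [map_smul, smul_apply, smul_eq_mul] at h
    change 0 < (B p w w + B p (Complex.I • w) (Complex.I • w)) / 4
    have h4 : (‖w‖⁻¹ * (‖w‖⁻¹ * B p w w) +
        ‖w‖⁻¹ * (‖w‖⁻¹ * B p (Complex.I • w) (Complex.I • w))) / 4 =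
        (‖w‖⁻¹ * ‖w‖⁻¹) * ((B p w w + B p (Complex.I • w) (Complex.I • w)) / 4) := by ring
    rw [h4] at h
    exact (pos_iff_pos_of_mul_pos h).1 (by positivity)


theorem aux_conn {X : Type*} [TopologicalSpace X] {S U : Set X} (hS : IsPreconnected S)
    (hU : IsOpen U) (hne : (S ∩ U).Nonempty) (hf : ∀ x ∈ S, x ∉ frontier U) : S ⊆ U := by
  refine hS.subset_left_of_subset_union hU isClosed_closure.isOpen_compl
    (Disjoint.mono_left subset_closure disjoint_compl_right) (fun x hx => ?_) hne
  by_cases h : x ∈ U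
  · exact Or.inl h
  · refine Or.inr fun hc => hf x hx ?_
    rw [hU.frontier_eq]
    exact ⟨hc, h⟩

/-- If `D` is strictly pseudoconvex with defining function `ρ` and `γ : bD × [0,1] → cl D`
is `C²`, maps into `D` for `r < 1`, satisfies `γ(x,1) = x` and hits `bD` transversally, then
for every compact `K ⊆ D` there is `r₀ ∈ (0,1)` such that for every `r ∈ (r₀,1)`, the set
`bD_r = γ(bD × {r})` is the boundary of a strictly pseudoconvex domain contained in `D` and
containing `K`. -/
theorem gamma_level_sets_strictly_pseudoconvex {N : ℕ} (D : Set (EN N)) (ρ : EN N → ℝ)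
    (hD : StrictPSCWith D ρ) (γ : EN N × ℝ → EN N) (hγ : GammaMap D ρ γ 2)
    (K : Set (EN N)) (hK : IsCompact K) (hKD : K ⊆ D) :
    ∃ r₀ ∈ Ioo (0:ℝ) 1, ∀ r ∈ Ioo r₀ 1,
      ∃ D' : Set (EN N), StrictlyPseudoconvex D' ∧ D' ⊆ D ∧ K ⊆ D' ∧
        frontier D' = (fun x => γ (x, r)) '' frontier D := by

  obtain ⟨⟨hDo, hDc⟩, hDb, ⟨V, hV, hclV, hρ, hDV, hdρ⟩, hlevi⟩ := hD
  obtain ⟨hγc, hγD, hγ1, -⟩ := hγ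
  have hBc : IsCompact (frontier D) :=
    hDb.isCompact_closure.of_isClosed_subset isClosed_frontier frontier_subset_closure
  have hcl : ∀ x ∈ closure D, ρ x ≤ 0 := by
    intro x hx
    have hcx : ContinuousWithinAt ρ D x :=
      ((hρ.contDiffAt (hV.mem_nhds (hclV hx))).continuousAt).continuousWithinAt
    have := hcx.mem_closure hx (t := Iic 0) (fun z hz => by
      rw [hDV] at hz
      exact le_of_lt hz.2)
    simpa using this
  have hz : ∀ x ∈ frontier D, x ∈ V ∧ ρ x = 0 := by
    intro x hx
    have hxc := frontier_subset_closure hx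
    refine ⟨hclV hxc, le_antisymm (hcl x hxc) (not_lt.1 fun h => ?_)⟩
    rw [hDo.frontier_eq] at hx
    apply hx.2
    rw [hDV]
    exact ⟨hclV hxc, h⟩
  obtain ⟨Φ, hΦs, hΦ2, hΦ0, σ, hσ, hΦγ⟩ := aux_flow (frontier D) hBc
    (fun x₀ hx₀ => aux_retract D ρ V hV hρ hDV hz x₀ hx₀ (hdρ x₀ hx₀)) γ hγc hγ1
  have hΨ0 : ∀ z, Φ.symm (z, 0) = (z, 0) := fun z => by
    rw [Homeomorph.symm_apply_eq, hΦ0]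
  have hΨ2 : ∀ p, (Φ.symm p).2 = p.2 := fun p => by
    have := hΦ2 (Φ.symm p)
    rw [Φ.apply_symm_apply] at this
    exact this.symm
  set R : EN N × ℝ → ℝ := fun p => ρ (Φ.symm p).1 with hR
  have hR0 : (fun y => R (y, 0)) = ρ := by
    funext y
    simp only [hR, hΨ0]
  -- the Levi condition
  have evL : ∀ᶠ s in 𝓝 (0:ℝ), ∀ x ∈ frontier D,
      fderiv ℝ (fun y => R (y, s)) (Φ (x, s)).1 ≠ 0 ∧
      ∀ w : EN N, w ≠ 0 → ComplexTangent (fun y => R (y, s)) (Φ (x, s)).1 w →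
        0 < LeviForm (fun y => R (y, s)) (Φ (x, s)).1 w := by
    apply hBc.eventually_forall_of_forall_eventually
    intro x₀ hx₀
    have hRc : ContDiffAt ℝ 2 R (x₀, 0) := by
      have h1 : ContDiffAt ℝ 2 (fun p => (Φ.symm p).1) (x₀, (0:ℝ)) := hΦs.contDiffAt.fst
      have h2 : ContDiffAt ℝ 2 ρ (Φ.symm (x₀, 0)).1 := by
        rw [hΨ0]
        exact hρ.contDiffAt (hV.mem_nhds (hz x₀ hx₀).1)
      exact ContDiffAt.comp (x₀, (0:ℝ)) h2 h1
    have hL := aux_levi R x₀ hRc (by rw [hR0]; exact hdρ x₀ hx₀)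
      (by rw [hR0]; exact hlevi x₀ hx₀)
    have ht : Tendsto (fun q : ℝ × EN N => Φ (q.2, q.1)) (𝓝 (0, x₀)) (𝓝 (x₀, 0)) := by
      have : Continuous (fun q : ℝ × EN N => Φ (q.2, q.1)) :=
        Φ.continuous.comp (by fun_prop)
      have h := this.tendsto (0, x₀)
      simp only [hΦ0] at h
      exact h
    filter_upwards [ht.eventually hL] with q hq
    rw [hΦ2] at hq
    exact hq
  have htΨ : ∀ y₀ : EN N, Tendsto (fun q : ℝ × EN N => (Φ.symm (q.2, q.1)).1)
      (𝓝 (0, y₀)) (𝓝 y₀) := by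
    intro y₀
    have : Continuous (fun q : ℝ × EN N => (Φ.symm (q.2, q.1)).1) :=
      continuous_fst.comp (Φ.symm.continuous.comp (by fun_prop))
    have h := this.tendsto (0, y₀)
    simp only [hΨ0] at h
    exact h
  -- `K` is contained in `D'`
  have evK : ∀ K' : Set (EN N), IsCompact K' → K' ⊆ D → ∀ᶠ s in 𝓝 (0:ℝ), ∀ k ∈ K',
      (Φ.symm (k, s)).1 ∈ D := by
    intro K' hK' hK'D
    apply hK'.eventually_forall_of_forall_eventually
    intro k hk
    exact (htΨ k).eventually (hDo.mem_nhds (hK'D hk))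
  -- exterior segments
  have evS : ∀ᶠ s in 𝓝 (0:ℝ), ∀ y ∈ frontier D, (y ∈ frontier D → ∃ v : EN N,
      (∀ t ∈ Icc (0:ℝ) 1, y + t • v ∉ D) ∧ (Φ.symm (y + v, s)).1 ∉ D) := by
    apply hBc.eventually_forall_of_forall_eventually
    intro x₀ hx₀
    obtain ⟨v, hv1, hv2⟩ := aux_segment D ρ V hV hρ hDV hcl hz x₀ hx₀ (hdρ x₀ hx₀)
    have h1 : Tendsto (fun q : ℝ × EN N => q.2) (𝓝 (0, x₀)) (𝓝 x₀) :=
      continuous_snd.tendsto (0, x₀)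
    have h2 : Tendsto (fun q : ℝ × EN N => (q.1, q.2 + v)) (𝓝 (0, x₀)) (𝓝 (0, x₀ + v)) :=
      (Continuous.tendsto (by fun_prop) ((0:ℝ), x₀))
    have h3 := ((htΨ (x₀ + v)).comp h2).eventually (isClosed_closure.isOpen_compl.mem_nhds hv1)
    filter_upwards [h1.eventually hv2, h3] with q hq1 hq2 hq3
    exact ⟨v, hq1 hq3, fun h => hq2 (subset_closure h)⟩
  obtain ⟨d, hd⟩ := hDc.nonempty
  have evAll : ∀ᶠ r in 𝓝[<] (1:ℝ), ∃ D' : Set (EN N), StrictlyPseudoconvex D' ∧ D' ⊆ D ∧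
      K ⊆ D' ∧ frontier D' = (fun x => γ (x, r)) '' frontier D := by
    filter_upwards [hσ.eventually evL, hσ.eventually (evK K hK hKD),
      hσ.eventually (evK {d} isCompact_singleton (by simpa using hd)), hσ.eventually evS, hΦγ,
      Ioo_mem_nhdsLT (zero_lt_one (α := ℝ))] with r hL hKr hdr hS hγr hr01
    set s := σ r with hs
    have eΨ : ∀ y, Φ.symm (y, s) = ((Φ.symm (y, s)).1, s) := fun y => Prod.ext rfl (hΨ2 _)
    have eΦ : ∀ y, Φ (y, s) = ((Φ (y, s)).1, s) := fun y => Prod.ext rfl (hΦ2 _)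
    let g : EN N ≃ₜ EN N :=
      { toFun := fun y => (Φ.symm (y, s)).1
        invFun := fun x => (Φ (x, s)).1
        left_inv := fun y => by
          show (Φ ((Φ.symm (y, s)).1, s)).1 = y
          rw [← eΨ, Φ.apply_symm_apply]
        right_inv := fun x => by
          show (Φ.symm ((Φ (x, s)).1, s)).1 = x
          rw [← eΦ, Φ.symm_apply_apply]
        continuous_toFun := continuous_fst.comp (Φ.symm.continuous.comp (by fun_prop))
        continuous_invFun := continuous_fst.comp (Φ.continuous.comp (by fun_prop)) }
    have hg : ∀ y, g y = (Φ.symm (y, s)).1 := fun y => rfl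
    have hgs : ∀ y, g.symm y = (Φ (y, s)).1 := fun y => rfl
    have hgC : ContDiff ℝ 2 g := by
      have : ContDiff ℝ 2 (fun y : EN N => (Φ.symm (y, s)).1) :=
        contDiff_fst.comp (hΦs.comp (contDiff_id.prodMk contDiff_const))
      exact this
    have hD'o : IsOpen (g ⁻¹' D) := hDo.preimage g.continuous
    have hfr : frontier (g ⁻¹' D) = g ⁻¹' frontier D := (g.preimage_frontier D).symm
    have hclo : closure (g ⁻¹' D) = g ⁻¹' closure D := (g.preimage_closure D).symm
    have hD'c : IsConnected (g ⁻¹' D) := g.isConnected_preimage.2 hDc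
    have hfrγ : frontier (g ⁻¹' D) = (fun x => γ (x, r)) '' frontier D := by
      rw [hfr]
      ext y
      constructor
      · intro hy
        refine ⟨g y, hy, ?_⟩
        have h := congrArg Prod.fst (hγr (g y) hy)
        rw [← hgs, g.symm_apply_apply] at h
        exact h.symm
      · rintro ⟨x, hx, rfl⟩
        have h := congrArg Prod.fst (hγr x hx)
        rw [← hgs] at h
        show g (γ (x, r)) ∈ frontier D
        have h' : g.symm x = γ (x, r) := h
        rw [← h', g.apply_symm_apply]
        exact hx
    have hfrD : frontier (g ⁻¹' D) ⊆ D := by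
      rw [hfrγ]
      rintro _ ⟨x, hx, rfl⟩
      exact hγD x hx r ⟨hr01.1.le, hr01.2⟩
    have hdisj : ∀ y ∈ g ⁻¹' D, y ∉ frontier D := by
      intro y hy hyf
      obtain ⟨v, hv1, hv2⟩ := hS y hyf hyf
      have hseg : IsPreconnected ((fun t : ℝ => y + t • v) '' Icc (0:ℝ) 1) :=
        isPreconnected_Icc.image _ (by fun_prop)
      have := aux_conn hseg hD'o
        ⟨y, ⟨0, by simp, by simp⟩, hy⟩
        (by
          rintro _ ⟨t, ht, rfl⟩ hf
          exact hv1 t ht (hfrD hf))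
      exact hv2 (this ⟨1, by simp, by simp⟩)
    refine ⟨g ⁻¹' D, ⟨fun y => R (y, s), ⟨hD'o, hD'c⟩, ?_, ⟨g ⁻¹' V, hV.preimage g.continuous,
      ?_, ?_, ?_, ?_⟩, ?_⟩, ?_, ?_, hfrγ⟩
    · have hcomp : IsCompact (g ⁻¹' closure D) := g.isCompact_preimage.2 hDb.isCompact_closure
      exact hcomp.isBounded.subset (preimage_mono subset_closure)
    · rw [hclo]
      exact preimage_mono hclV
    · exact hρ.comp hgC.contDiffOn (fun y hy => hy)
    · ext y
      show g y ∈ D ↔ g y ∈ V ∧ ρ (g y) < 0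
      conv_lhs => rw [hDV]
      rfl
    · intro y hy
      rw [hfr] at hy
      have h := (hL (g y) hy).1
      rw [← hgs, g.symm_apply_apply] at h
      exact h
    · intro y hy
      rw [hfr] at hy
      have h := (hL (g y) hy).2
      rw [← hgs, g.symm_apply_apply] at h
      exact h
    · exact aux_conn hD'c.isPreconnected hDo ⟨d, hdr d rfl, hd⟩ hdisj
    · exact fun k hk => hKr k hk
  obtain ⟨l, hl, hlr⟩ := (mem_nhdsLT_iff_exists_Ioo_subset).1 evAll
  refine ⟨max l (1/2), ⟨lt_max_of_lt_right (by norm_num), max_lt hl (by norm_num)⟩,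
    fun r hr => hlr ⟨(le_max_left _ _).trans_lt hr.1, hr.2⟩⟩
end
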